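/- arXiv:1507.08247 — 2 statements merged into one kernel-verified Lean document; each statement's English description precedes it below -/
import Mathlib

section
/- Let k ∈ ℕ₀, 0 < θ < 1/2 and σ > 0. Let B̂ be the ball of maximal radius contained in T̂, with center ẑ and radius r̂, and define η_{B̂}(x) := exp(1/(|x − ẑ|²/r̂² − 1)) if |x − ẑ| < r̂ and η_{B̂}(x) := 0 otherwise. Then there exists a constant C, depending only on θ, k and σ, such that for every invertible affine map F : ℝ² → ℝ² for which the triangle T := F(T̂) has minimum interior angle ≥ σ, setting η_T := η_{B̂} ∘ F^{−1} and h_T := |T|^{1/2}, every polynomial V of total degree ≤ k in two variables satisfies ∫_T V² dx ≤ C · ∫_T V² η_T dx and |∇(V·η_T)|_{θ, int T} ≤ C · h_T^{−1−θ} · ‖V‖_{L²(T)}, where |∇w|_{θ,G} := (|∂₁w|²_{θ,G} + |∂₂w|²_{θ,G})^{1/2}. -/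
open MeasureTheory Metric Set Filter
open scoped Topology NNReal ENNReal

noncomputable section

abbrev E2 := EuclideanSpace ℝ (Fin 2)

/-- Squared Gagliardo seminorm of order `s` on `G ⊆ ℝ²`. -/
def gagSq (s : ℝ) (G : Set E2) (v : E2 → ℝ) : ℝ :=
  ∫ x in G, ∫ y in G, (v x - v y) ^ 2 / dist x y ^ (2 + 2 * s)

/-- Partial derivative in the `i`-th coordinate direction. -/
def pd (i : Fin 2) (f : E2 → ℝ) (x : E2) : ℝ := fderiv ℝ f x (EuclideanSpace.single i 1)

/-- All interior angles of the triangle `t` are at least `σ`. -/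
def angleLB (σ : ℝ) (t : Fin 3 → E2) : Prop :=
  ∀ i : Fin 3, σ ≤ EuclideanGeometry.angle (t (i + 1)) (t i) (t (i + 2))

/-- The open reference triangle with vertices `(0,0)`, `(1,0)`, `(0,1)`. -/
def refTri : Set E2 := {x : E2 | 0 < x 0 ∧ 0 < x 1 ∧ x 0 + x 1 < 1}

/-- The vertices of the reference triangle. -/
def refVert : Fin 3 → E2 := ![0, EuclideanSpace.single 0 1, EuclideanSpace.single 1 1]

/-- The radius of the maximal ball contained in the reference triangle. -/
def incR : ℝ := 1 - Real.sqrt 2 / 2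

/-- The center of the maximal ball contained in the reference triangle. -/
def incC : E2 := EuclideanSpace.single 0 incR + EuclideanSpace.single 1 incR

open Classical in
/-- The standard bump function of the ball with center `c` and radius `r`:
`x ↦ exp(1/(|x−c|²/r² − 1))` inside the ball and `0` outside. -/
def etaBump (c : E2) (r : ℝ) (x : E2) : ℝ :=
  if dist x c < r then Real.exp (1 / ((dist x c) ^ 2 / r ^ 2 - 1)) else 0

/-- Evaluation of a polynomial in two variables. -/
def pfun (p : MvPolynomial (Fin 2) ℝ) (x : E2) : ℝ := MvPolynomial.eval (fun i => x i) p

lemma etaBump_eq (x : E2) : etaBump incC incR x =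
    expNegInvGlue (1 - (dist x incC) ^ 2 / incR ^ 2) := by
  have hr : 0 < incR := by
    unfold incR
    nlinarith [Real.sq_sqrt (show (0:ℝ) ≤ 2 by norm_num), Real.sqrt_nonneg 2]
  unfold etaBump expNegInvGlue
  by_cases h : dist x incC < incR
  · have h1 : dist x incC ^ 2 / incR ^ 2 < 1 := by
      rw [div_lt_one (by positivity)]
      exact pow_lt_pow_left₀ h dist_nonneg (by norm_num)
    rw [if_pos h, if_neg (by linarith)]
    congr 1
    rw [← neg_sub, one_div, inv_neg]
  · have h1 : 1 ≤ dist x incC ^ 2 / incR ^ 2 := by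
      rw [one_le_div (by positivity)]
      exact pow_le_pow_left₀ hr.le (not_lt.1 h) _
    rw [if_neg h, if_pos (by linarith)]

lemma incR_pos : 0 < incR := by
  unfold incR
  nlinarith [Real.sq_sqrt (show (0:ℝ) ≤ 2 by norm_num), Real.sqrt_nonneg 2]

lemma incR_lt : incR < 3 / 10 := by
  unfold incR
  nlinarith [Real.sq_sqrt (show (0:ℝ) ≤ 2 by norm_num), Real.sqrt_nonneg 2]

abbrev eta : E2 → ℝ := etaBump incC incR

lemma eta_smooth : ContDiff ℝ 2 eta := by
  have : eta = fun x => expNegInvGlue (1 - (dist x incC) ^ 2 / incR ^ 2) := by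
    ext x; exact etaBump_eq x
  rw [this]
  refine expNegInvGlue.contDiff.comp (contDiff_const.sub (ContDiff.div_const ?_ _))
  simp_rw [dist_eq_norm]
  exact (contDiff_id.sub contDiff_const).norm_sq ℝ

lemma eta_nonneg (x : E2) : 0 ≤ eta x := by
  rw [eta, etaBump_eq]; exact expNegInvGlue.nonneg _

lemma eta_le_one (x : E2) : eta x ≤ 1 := by
  unfold eta etaBump
  split_ifs with h
  · rw [Real.exp_le_one_iff]
    apply div_nonpos_of_nonneg_of_nonpos zero_le_one
    rw [sub_nonpos]
    apply div_le_one_of_le₀ _ (by positivity)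
    exact pow_le_pow_left₀ dist_nonneg h.le _
  · exact zero_le_one

lemma eta_pos {x : E2} (h : dist x incC < incR) : 0 < eta x := by
  unfold eta etaBump
  rw [if_pos h]; positivity

lemma eta_cpt : HasCompactSupport eta := by
  refine HasCompactSupport.intro (isCompact_closedBall incC incR) ?_
  intro x hx
  unfold eta etaBump
  rw [if_neg]
  intro h
  exact hx (by simpa using h.le)

lemma pfun_smooth (p : MvPolynomial (Fin 2) ℝ) : ContDiff ℝ 2 (pfun p) := by
  unfold pfun
  induction p using MvPolynomial.induction_on with
  | C a => simpa using contDiff_const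
  | add p q hp hq => simpa using hp.add hq
  | mul_X p i hp =>
    simp only [map_mul, MvPolynomial.eval_X]
    exact hp.mul (by fun_prop)

lemma refTri_open : IsOpen refTri := by
  unfold refTri
  refine IsOpen.inter ?_ (IsOpen.inter ?_ ?_)
  · exact isOpen_lt (f := fun _ : E2 => (0:ℝ)) (g := fun x : E2 => x 0) (by fun_prop) (by fun_prop)
  · exact isOpen_lt (f := fun _ : E2 => (0:ℝ)) (g := fun x : E2 => x 1) (by fun_prop) (by fun_prop)
  · exact isOpen_lt (f := fun x : E2 => x 0 + x 1) (g := fun _ : E2 => (1:ℝ)) (by fun_prop) (by fun_prop)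

lemma refTri_sub : refTri ⊆ closedBall 0 1 := by
  intro x hx
  obtain ⟨h0, h1, h2⟩ := hx
  rw [mem_closedBall_zero_iff, EuclideanSpace.norm_eq, Real.sqrt_le_left zero_le_one, one_pow]
  simp only [Fin.sum_univ_two, Real.norm_eq_abs, sq_abs]
  nlinarith

lemma refTri_int {f : E2 → ℝ} (hf : Continuous f) : IntegrableOn f refTri :=
  (hf.continuousOn.integrableOn_compact (isCompact_closedBall 0 1)).mono_set refTri_sub

lemma quad_lb {n : ℕ} (N : (Fin n → ℝ) → ℝ) (hc : Continuous N)
    (hom : ∀ (t : ℝ) c, N (t • c) = t ^ 2 * N c) (pos : ∀ c, c ≠ 0 → 0 < N c) :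
    ∃ δ : ℝ, 0 < δ ∧ ∀ c, δ * ‖c‖ ^ 2 ≤ N c := by
  have h0 : N 0 = 0 := by simpa using hom 0 0
  by_cases hne : (sphere (0 : Fin n → ℝ) 1).Nonempty
  · obtain ⟨c0, hc0, hmin⟩ := (isCompact_sphere (0 : Fin n → ℝ) 1).exists_isMinOn hne hc.continuousOn
    refine ⟨N c0, pos c0 (by rintro rfl; simp at hc0), fun c => ?_⟩
    by_cases h : c = 0
    · simp [h, h0]
    · have hn : ‖c‖ ≠ 0 := by simpa using h
      have h1 : N c0 ≤ N (‖c‖⁻¹ • c) := hmin (by simp [norm_smul, hn])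
      rw [hom] at h1
      have h2 : 0 < ‖c‖ ^ 2 := by positivity
      calc N c0 * ‖c‖ ^ 2 ≤ (‖c‖⁻¹ ^ 2 * N c) * ‖c‖ ^ 2 := by gcongr
        _ = N c := by field_simp
  · refine ⟨1, one_pos, fun c => ?_⟩
    by_cases h : c = 0
    · simp [h, h0]
    · exact absurd ⟨‖c‖⁻¹ • c, by have hn : ‖c‖ ≠ 0 := by simpa using h
                                  simp [norm_smul, hn]⟩ hne

lemma pos_int (q : MvPolynomial (Fin 2) ℝ) (hq : q ≠ 0) :
    0 < ∫ x in refTri, pfun q x ^ 2 * eta x := by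
  have hr := incR_pos
  have hr' := incR_lt
  have hcont : Continuous fun x => pfun q x ^ 2 * eta x :=
    ((pfun_smooth q).continuous.pow 2).mul eta_smooth.continuous
  have hnn : ∀ x, 0 ≤ pfun q x ^ 2 * eta x := fun x => mul_nonneg (sq_nonneg _) (eta_nonneg x)
  rw [setIntegral_pos_iff_support_of_nonneg_ae (Eventually.of_forall hnn) (refTri_int hcont)]
  refine IsOpen.measure_pos _ ((hcont.isOpen_support).inter refTri_open) ?_
  by_contra hemp
  apply hq
  refine MvPolynomial.funext_set (fun _ => Ioo (incR / 2) (3 * incR / 2))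
    (fun _ => Ioo_infinite (by linarith)) ?_
  intro z hz
  simp only [Set.mem_pi, mem_univ, true_imp_iff, mem_Ioo] at hz
  rw [map_zero]
  by_contra hne
  apply hemp
  refine ⟨WithLp.toLp 2 z, ?_, ?_⟩
  · have h0 := hz 0
    have h1 := hz 1
    rw [Function.mem_support]
    refine mul_ne_zero (pow_ne_zero _ hne) (eta_pos ?_).ne'
    rw [EuclideanSpace.dist_eq, Real.sqrt_lt' hr]
    simp [incC, Real.dist_eq, Fin.sum_univ_two]
    nlinarith
  · have h0 := hz 0
    have h1 := hz 1
    refine ⟨?_, ?_, ?_⟩ <;> simp <;> linarith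

lemma poly_bd (k : ℕ) : ∃ C : ℝ, 0 < C ∧ ∀ q : MvPolynomial (Fin 2) ℝ, q.totalDegree ≤ k →
    (∫ x in refTri, pfun q x ^ 2) ≤ C * (∫ x in refTri, pfun q x ^ 2 * eta x) ∧
    ∀ x y, ‖fderiv ℝ (fun z => pfun q z * eta z) x - fderiv ℝ (fun z => pfun q z * eta z) y‖ ^ 2
      ≤ C * (∫ x in refTri, pfun q x ^ 2) * dist x y ^ 2 := by
  set W := MvPolynomial.restrictTotalDegree (Fin 2) ℝ k
  set B := Module.finBasis ℝ W
  set n := Module.finrank ℝ W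
  let m : Fin n → MvPolynomial (Fin 2) ℝ := fun j => (B j : MvPolynomial (Fin 2) ℝ)
  let P : (Fin n → ℝ) → MvPolynomial (Fin 2) ℝ := fun c => ∑ j, c j • m j
  have hPf : ∀ c x, pfun (P c) x = ∑ j, c j * pfun (m j) x := by
    intro c x; simp [P, pfun, map_sum, MvPolynomial.smul_eval]
  have hPsurj : ∀ q : MvPolynomial (Fin 2) ℝ, q.totalDegree ≤ k → ∃ c, P c = q := by
    intro q hq
    refine ⟨fun j => B.repr ⟨q, (MvPolynomial.mem_restrictTotalDegree _ _ _).2 hq⟩ j, ?_⟩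
    have := B.sum_repr ⟨q, (MvPolynomial.mem_restrictTotalDegree _ _ _).2 hq⟩
    have h2 := congrArg (Subtype.val) this
    rw [AddSubmonoidClass.coe_finsetSum] at h2
    exact h2
  have hPne : ∀ c, c ≠ 0 → P c ≠ 0 := by
    intro c hc h
    apply hc
    have h1 : ∑ j, c j • B j = 0 := by
      apply Subtype.ext
      simpa [P, m] using h
    have := Fintype.linearIndependent_iff.1 B.linearIndependent c h1
    ext j; exact this j
  have hmc : ∀ j, Continuous (pfun (m j)) := fun j => (pfun_smooth _).continuous
  -- quadratic expansion
  have hquad : ∀ (w : E2 → ℝ), Continuous w → ∀ c, ∫ x in refTri, pfun (P c) x ^ 2 * w x =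
      ∑ i, ∑ j, c i * c j * ∫ x in refTri, pfun (m i) x * pfun (m j) x * w x := by
    intro w hw c
    have h1 : ∀ x, pfun (P c) x ^ 2 * w x =
        ∑ i, ∑ j, c i * c j * (pfun (m i) x * pfun (m j) x * w x) := by
      intro x
      rw [hPf, sq, Finset.sum_mul_sum, Finset.sum_mul]
      refine Finset.sum_congr rfl fun i _ => ?_
      rw [Finset.sum_mul]
      refine Finset.sum_congr rfl fun j _ => ?_
      ring
    have hI : ∀ i j, IntegrableOn (fun x => c i * c j * (pfun (m i) x * pfun (m j) x * w x)) refTri :=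
      fun i j => refTri_int (continuous_const.mul (((hmc i).mul (hmc j)).mul hw))
    simp_rw [h1]
    rw [integral_finsetSum _ (fun i _ => integrable_finsetSum _ fun j _ => hI i j)]
    refine Finset.sum_congr rfl fun i _ => ?_
    rw [integral_finsetSum _ (fun j _ => hI i j)]
    refine Finset.sum_congr rfl fun j _ => ?_
    rw [integral_const_mul]
  obtain ⟨δ, hδ, hlb⟩ := quad_lb (fun c => ∫ x in refTri, pfun (P c) x ^ 2 * eta x)
    (by simp_rw [hquad eta eta_smooth.continuous]; fun_prop)
    (by
      intro t c
      simp_rw [hquad eta eta_smooth.continuous, Finset.mul_sum]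
      refine Finset.sum_congr rfl fun i _ => Finset.sum_congr rfl fun j _ => ?_
      simp only [Pi.smul_apply, smul_eq_mul]; ring)
    (fun c hc => pos_int _ (hPne c hc))
  set M := ∑ i, ∑ j, |∫ x in refTri, pfun (m i) x * pfun (m j) x * 1| with hM
  have hM0 : 0 ≤ M := Finset.sum_nonneg fun i _ => Finset.sum_nonneg fun j _ => abs_nonneg _
  have hub : ∀ c, ∫ x in refTri, pfun (P c) x ^ 2 ≤ M * ‖c‖ ^ 2 := by
    intro c
    have := hquad (fun _ => 1) continuous_const c
    simp only [mul_one] at this hM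
    rw [this, hM, Finset.sum_mul]
    refine Finset.sum_le_sum fun i _ => ?_
    rw [Finset.sum_mul]
    refine Finset.sum_le_sum fun j _ => ?_
    refine (le_abs_self _).trans ?_
    rw [abs_mul, mul_comm, abs_mul, sq]
    gcongr
    · exact norm_le_pi_norm c i
    · exact norm_le_pi_norm c j
  have hsm : ∀ j, ContDiff ℝ 2 (fun z => pfun (m j) z * eta z) :=
    fun j => (pfun_smooth _).mul eta_smooth
  have hlip : ∀ j, ∃ K : ℝ≥0, LipschitzWith K (fderiv ℝ (fun z => pfun (m j) z * eta z)) := by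
    intro j
    refine ContDiff.lipschitzWith_of_hasCompactSupport (𝕂 := ℝ) (n := 1) ?_ ?_ (by norm_num)
    · exact HasCompactSupport.fderiv ℝ (eta_cpt.mul_left)
    · exact (hsm j).fderiv_right (by norm_num)
  choose K hK using hlip
  set S : ℝ := ∑ j, (K j : ℝ) with hS
  have hS0 : 0 ≤ S := Finset.sum_nonneg fun j _ => (K j).2
  have hfd : ∀ c x, fderiv ℝ (fun z => pfun (P c) z * eta z) x =
      ∑ j, c j • fderiv ℝ (fun z => pfun (m j) z * eta z) x := by
    intro c x
    have h1 : (fun z => pfun (P c) z * eta z) =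
        fun z => ∑ j, c j • (pfun (m j) z * eta z) := by
      ext z
      rw [hPf, Finset.sum_mul]
      refine Finset.sum_congr rfl fun j _ => ?_
      simp only [smul_eq_mul]; ring
    have hd : ∀ j, DifferentiableAt ℝ (fun z => pfun (m j) z * eta z) x :=
      fun j => (hsm j).differentiable (by norm_num) x
    rw [h1, fderiv_fun_sum (fun j _ => (hd j).fun_const_smul (c j))]
    refine Finset.sum_congr rfl fun j _ => ?_
    rw [fderiv_fun_const_smul (hd j)]
  have hLb : ∀ c x y, ‖fderiv ℝ (fun z => pfun (P c) z * eta z) x -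
      fderiv ℝ (fun z => pfun (P c) z * eta z) y‖ ≤ S * ‖c‖ * dist x y := by
    intro c x y
    rw [hfd, hfd, ← Finset.sum_sub_distrib]
    refine (norm_sum_le _ _).trans ?_
    rw [hS, Finset.sum_mul, Finset.sum_mul]
    refine Finset.sum_le_sum fun j _ => ?_
    rw [← smul_sub, norm_smul, ← dist_eq_norm, mul_comm (K j : ℝ), mul_assoc]
    gcongr
    · exact norm_le_pi_norm c j
    · exact (hK j).dist_le_mul x y
  refine ⟨(M + S ^ 2 + 1) / δ, by positivity, fun q hq => ?_⟩
  obtain ⟨c, rfl⟩ := hPsurj q hq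
  have hl : ‖c‖ ^ 2 ≤ (∫ x in refTri, pfun (P c) x ^ 2 * eta x) / δ := by
    rw [le_div_iff₀ hδ, mul_comm]; exact hlb c
  have hcP := (pfun_smooth (P c)).continuous
  have hle : ∫ x in refTri, pfun (P c) x ^ 2 * eta x ≤ ∫ x in refTri, pfun (P c) x ^ 2 := by
    refine integral_mono (refTri_int ((hcP.pow 2).mul eta_smooth.continuous))
      (refTri_int (hcP.pow 2)) fun x => ?_
    exact mul_le_of_le_one_right (sq_nonneg _) (eta_le_one x)
  have hN0 : 0 ≤ ∫ x in refTri, pfun (P c) x ^ 2 * eta x :=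
    integral_nonneg fun x => mul_nonneg (sq_nonneg _) (eta_nonneg x)
  refine ⟨?_, fun x y => ?_⟩
  · refine (hub c).trans ((mul_le_mul_of_nonneg_left hl hM0).trans ?_)
    rw [div_mul_eq_mul_div, mul_div_assoc']
    gcongr
    nlinarith [sq_nonneg S]
  · calc _ ≤ (S * ‖c‖ * dist x y) ^ 2 := by gcongr; exact hLb c x y
      _ = S ^ 2 * ‖c‖ ^ 2 * dist x y ^ 2 := by ring
      _ ≤ S ^ 2 * ((∫ x in refTri, pfun (P c) x ^ 2) / δ) * dist x y ^ 2 := by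
        gcongr; exact hl.trans (by gcongr)
      _ ≤ (M + S ^ 2 + 1) * ((∫ x in refTri, pfun (P c) x ^ 2) / δ) * dist x y ^ 2 := by
        have : 0 ≤ (∫ x in refTri, pfun (P c) x ^ 2) / δ := div_nonneg (hN0.trans hle) hδ.le
        gcongr
        linarith
      _ = _ := by ring

lemma alg_aux (x y a b c d : ℝ) : (x * d - y * c) ^ 2 + (a * y - b * x) ^ 2 ≤
    (x ^ 2 + y ^ 2) * (a ^ 2 + b ^ 2 + (c ^ 2 + d ^ 2)) := by
  have : (x ^ 2 + y ^ 2) * (a ^ 2 + b ^ 2 + (c ^ 2 + d ^ 2)) = (x * d - y * c) ^ 2 +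
    (a * y - b * x) ^ 2 + ((x * c + y * d) ^ 2 + (x * a + y * b) ^ 2) := by ring
  rw [this]
  have := sq_nonneg (x * c + y * d)
  have := sq_nonneg (x * a + y * b)
  linarith

lemma geom (σ : ℝ) (hσ : 0 < σ) : ∃ c : ℝ, 0 < c ∧ ∀ (A : E2 ≃L[ℝ] E2) (b : E2),
    angleLB σ (fun i => A (refVert i) + b) →
    ∀ x, ‖A.symm x‖ ^ 2 ≤ c / |LinearMap.det (A : E2 →ₗ[ℝ] E2)| * ‖x‖ ^ 2 := by
  set τ := min σ 1
  have hτ : 0 < τ := lt_min hσ one_pos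
  have hτ1 : τ ≤ 1 := min_le_right _ _
  have hpi := Real.pi_gt_three
  set s := Real.sin τ
  have hs : 0 < s := Real.sin_pos_of_pos_of_lt_pi hτ (by linarith)
  have hsin : ∀ φ, τ ≤ φ → φ ≤ Real.pi - τ → s ≤ Real.sin φ := by
    intro φ h1 h2
    by_cases h : φ ≤ Real.pi / 2
    · exact Real.sin_le_sin_of_le_of_le_pi_div_two (by linarith) h h1
    · rw [← Real.sin_pi_sub φ]
      exact Real.sin_le_sin_of_le_of_le_pi_div_two (by linarith) (by linarith) (by linarith)
  refine ⟨4 / s, by positivity, fun A b hA x => ?_⟩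
  set a := A (EuclideanSpace.single 0 1) with ha
  set c := A (EuclideanSpace.single 1 1) with hc
  have hdet : LinearMap.det (A : E2 →ₗ[ℝ] E2) = a 0 * c 1 - c 0 * a 1 := by
    rw [← LinearMap.det_toMatrix (EuclideanSpace.basisFun (Fin 2) ℝ).toBasis, Matrix.det_fin_two]
    simp [LinearMap.toMatrix_apply, ha, hc]
  set D := |LinearMap.det (A : E2 →ₗ[ℝ] E2)| with hD
  have hDpos : 0 < D := abs_pos.2 (LinearEquiv.isUnit_det' A.toLinearEquiv).ne_zero
  have hne : a ≠ 0 := by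
    intro h
    have := A.injective (h.trans (map_zero A).symm)
    have h2 := congrArg (fun v : E2 => v 0) this
    simp at h2
  have h0 := hA 0
  have h1 := hA 1
  have h2 := hA 2
  have e3 : (1 : Fin 3) + 1 = 2 := rfl
  have e4 : (1 : Fin 3) + 2 = 0 := rfl
  have e5 : (2 : Fin 3) + 1 = 0 := rfl
  have e6 : (2 : Fin 3) + 2 = 1 := rfl
  have hsum := EuclideanGeometry.angle_add_angle_add_angle_eq_pi
    (p₁ := A (refVert 1) + b) (p₂ := A (refVert 0) + b) (A (refVert 2) + b)
    (by simp [refVert, ← ha]; exact hne)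
  simp only [e3, e4, e5, e6, zero_add] at h0 h1 h2
  rw [EuclideanGeometry.angle_comm _ (A (refVert 2) + b)] at hsum
  rw [EuclideanGeometry.angle_comm _ (A (refVert 2) + b)] at h2
  have hm : τ ≤ σ := min_le_left _ _
  have g0 := hsin _ (hm.trans h0) (by linarith)
  have g1 := hsin _ (hm.trans h1) (by linarith)
  have g2 := hsin _ (hm.trans h2) (by linarith)
  have key : ∀ u v : E2, s ≤ Real.sin (InnerProductGeometry.angle u v) →
      |u 0 * v 1 - u 1 * v 0| = D → s * (‖u‖ * ‖v‖) ≤ D := by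
    intro u v h hd
    refine (mul_le_mul_of_nonneg_right h (by positivity)).trans ?_
    rw [InnerProductGeometry.sin_angle_mul_norm_mul_norm, ← hd, ← Real.sqrt_sq_eq_abs]
    apply Real.sqrt_le_sqrt
    rw [real_inner_self_eq_norm_sq, real_inner_self_eq_norm_sq, EuclideanSpace.norm_sq_eq,
      EuclideanSpace.norm_sq_eq]
    simp only [PiLp.inner_apply, Fin.sum_univ_two, Real.norm_eq_abs, sq_abs, Real.inner_apply]
    apply le_of_eq
    ring
  have q0 : ∀ i, A (refVert i) + b - (A (refVert 0) + b) = A (refVert i) := by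
    intro i; simp [refVert]
  have v1 : A (refVert 1) = a := by simp [refVert, ha]
  have v2 : A (refVert 2) = c := by simp [refVert, hc]
  have v0 : A (refVert 0) = 0 := by simp [refVert]
  simp only [EuclideanGeometry.angle, vsub_eq_sub, add_sub_add_right_eq_sub, v0, v1, v2] at g0 g1 g2
  have k0 := key _ _ g0 (by rw [hD, hdet]; simp; ring_nf)
  have k1 := key _ _ g1 (by
    rw [hD, hdet]; congr 1; simp; ring_nf)  
  have k2 := key _ _ g2 (by
    rw [hD, hdet, ← abs_neg]; congr 1; simp; ring_nf)
  simp only [sub_zero, zero_sub, norm_neg] at k0 k1 k2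
  rw [norm_sub_rev a c] at k2
  have t1 : ‖a‖ ≤ ‖c‖ + ‖c - a‖ := by
    have := norm_sub_le c (c - a); simpa using this
  have t2 : ‖c‖ ≤ ‖a‖ + ‖c - a‖ := by
    have := norm_add_le a (c - a); simpa using this
  have hac : s * (‖a‖ ^ 2 + ‖c‖ ^ 2) ≤ 4 * D := by
    have u1 := mul_le_mul_of_nonneg_left t1 (mul_nonneg hs.le (norm_nonneg a))
    have u2 := mul_le_mul_of_nonneg_left t2 (mul_nonneg hs.le (norm_nonneg c))
    nlinarith
  obtain ⟨y, rfl⟩ := A.surjective x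
  rw [ContinuousLinearEquiv.symm_apply_apply]
  have hy : y = y 0 • EuclideanSpace.single 0 (1:ℝ) + y 1 • EuclideanSpace.single 1 (1:ℝ) := by
    ext i; fin_cases i <;> simp
  have hAy : A y = y 0 • a + y 1 • c := by
    conv_lhs => rw [hy]
    simp [ha, hc]
  have hA0 : A y 0 = y 0 * a 0 + y 1 * c 0 := by rw [hAy]; simp
  have hA1 : A y 1 = y 0 * a 1 + y 1 * c 1 := by rw [hAy]; simp
  have hns : ∀ z : E2, ‖z‖ ^ 2 = z 0 ^ 2 + z 1 ^ 2 := by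
    intro z; rw [EuclideanSpace.norm_sq_eq]; simp [Fin.sum_univ_two]
  have hDD : D ^ 2 = (a 0 * c 1 - c 0 * a 1) ^ 2 := by rw [hD, sq_abs, hdet]
  have e1 : D ^ 2 * ‖y‖ ^ 2 ≤ ‖A y‖ ^ 2 * (‖a‖ ^ 2 + ‖c‖ ^ 2) := by
    have : D ^ 2 * ‖y‖ ^ 2 =
        (A y 0 * c 1 - A y 1 * c 0) ^ 2 + (a 0 * A y 1 - a 1 * A y 0) ^ 2 := by
      rw [hDD, hA0, hA1, hns]; ring
    rw [this, hns, hns, hns]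
    exact alg_aux _ _ _ _ _ _
  have e2 : D ^ 2 * ‖y‖ ^ 2 * s ≤ 4 * D * ‖A y‖ ^ 2 := by
    have f1 := mul_le_mul_of_nonneg_left hac (sq_nonneg ‖A y‖)
    have f2 := mul_le_mul_of_nonneg_right e1 hs.le
    linarith
  have e3 : D * ‖y‖ ^ 2 * s ≤ 4 * ‖A y‖ ^ 2 := by
    refine le_of_mul_le_mul_left ?_ hDpos
    linarith
  rw [div_div, div_mul_eq_mul_div, le_div_iff₀ (by positivity)]
  linarith

lemma gag_bound (θ : ℝ) (hθ0 : 0 < θ) (hθ : θ < 1 / 2) : ∃ c : ℝ, 0 < c ∧ ∀ (h : ℝ), 0 < h →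
    ∀ G : Set E2, volume G = ENNReal.ofReal (h ^ 2) → ∀ (v : E2 → ℝ) (L : ℝ), 0 ≤ L →
    (∀ x y, (v x - v y) ^ 2 ≤ L * dist x y ^ 2) →
    gagSq θ G v ≤ c * L * h ^ 2 * (h ^ 2 * h ^ (-2 * θ)) := by
  let f : E2 → ℝ := (ball (0 : E2) 1).indicator (fun z => ‖z‖ ^ (-2 * θ))
  have hf0 : ∀ z, 0 ≤ f z := fun z => indicator_nonneg (fun _ _ => by positivity) z
  have hfi : Integrable f := by
    rw [integrable_indicator_iff measurableSet_ball]
    rw [integrableOn_fun_norm_addHaar volume (f := fun t : ℝ => t ^ (-2 * θ))]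
    simp only [finrank_euclideanSpace, Fintype.card_fin, smul_eq_mul]
    have : IntegrableOn (fun t : ℝ => t ^ (1 - 2 * θ)) (Ioo 0 1) := by
      rw [← intervalIntegrable_iff_integrableOn_Ioo_of_le zero_le_one]
      exact intervalIntegral.intervalIntegrable_rpow' (by linarith)
    refine this.congr_fun (fun t ht => ?_) measurableSet_Ioo
    have : (0:ℝ) < t := ht.1
    simp only [Nat.add_one_sub_one, pow_one]
    nth_rw 2 [← Real.rpow_one t]
    rw [← Real.rpow_add this]; ring_nf
  set κ := ∫ z, f z
  have hκ : 0 ≤ κ := integral_nonneg hf0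
  refine ⟨κ + 1, by positivity, fun h hh G hG v L hL hv => ?_⟩
  have hGf : volume G ≠ ⊤ := by rw [hG]; exact ENNReal.ofReal_ne_top
  have hGr : (volume.real G) = h ^ 2 := by
    rw [measureReal_def, hG, ENNReal.toReal_ofReal (by positivity)]
  let g : E2 → E2 → ℝ := fun x y => L * h ^ (-2 * θ) * (f (h⁻¹ • (y - x)) + 1)
  have hfx : ∀ x, Integrable (fun y => f (h⁻¹ • (y - x))) := fun x =>
    (hfi.comp_smul (inv_ne_zero hh.ne')).comp_sub_right x
  have hone : IntegrableOn (fun _ : E2 => (1 : ℝ)) G := integrableOn_const hGf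
  have hgi : ∀ x, IntegrableOn (g x) G := fun x =>
    (((hfx x).integrableOn).add hone).const_mul _
  have hgint : ∀ x, ∫ y in G, g x y ≤ L * h ^ (-2 * θ) * ((κ + 1) * h ^ 2) := by
    intro x
    simp only [g]
    rw [integral_const_mul, integral_add (hfx x).integrableOn hone]
    gcongr
    rw [add_mul]
    refine add_le_add ?_ ?_
    · refine (setIntegral_le_integral (hfx x) (Eventually.of_forall fun _ => hf0 _)).trans ?_
      rw [integral_sub_right_eq_self (fun y => f (h⁻¹ • y)) x, Measure.integral_comp_smul]
      simp only [finrank_euclideanSpace, Fintype.card_fin, smul_eq_mul]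
      rw [inv_pow, inv_inv, abs_of_pos (by positivity), mul_comm]
    · simp [hGr]
  have hpt : ∀ x y, (v x - v y) ^ 2 / dist x y ^ (2 + 2 * θ) ≤ g x y := by
    intro x y
    have hg0 : 0 ≤ g x y := by
      have := hf0 (h⁻¹ • (y - x))
      simp only [g]; positivity
    by_cases hxy : x = y
    · subst hxy; simpa using hg0
    have hd : 0 < dist x y := dist_pos.2 hxy
    have h1 : (v x - v y) ^ 2 / dist x y ^ (2 + 2 * θ) ≤ L * dist x y ^ (-2 * θ) := by
      rw [div_le_iff₀ (by positivity), mul_assoc, ← Real.rpow_add hd]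
      have : (-2 * θ + (2 + 2 * θ)) = (2 : ℕ) := by push_cast; ring
      rw [this, Real.rpow_natCast]; exact hv x y
    refine h1.trans ?_
    simp only [g]
    rw [mul_assoc]
    gcongr
    have hn : ‖h⁻¹ • (y - x)‖ = h⁻¹ * dist x y := by
      rw [norm_smul, ← dist_eq_norm, dist_comm, Real.norm_of_nonneg (by positivity)]
    by_cases hb : dist x y < h
    · have hm : h⁻¹ • (y - x) ∈ ball (0 : E2) 1 := by
        rw [mem_ball_zero_iff, hn, inv_mul_lt_iff₀ hh]; linarith
      have : f (h⁻¹ • (y - x)) = (h⁻¹ * dist x y) ^ (-2 * θ) := by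
        simp only [f]; rw [indicator_of_mem hm, hn]
      rw [this, mul_add, ← Real.mul_rpow hh.le (by positivity), mul_inv_cancel_left₀ hh.ne']
      have : 0 < h ^ (-2 * θ) := by positivity
      linarith
    · have := hf0 (h⁻¹ • (y - x))
      refine (Real.rpow_le_rpow_of_nonpos hh (not_lt.1 hb) (by linarith)).trans ?_
      have h3 : 0 < h ^ (-2 * θ) := by positivity
      nlinarith
  unfold gagSq
  have hin : ∀ x, ∫ y in G, (v x - v y) ^ 2 / dist x y ^ (2 + 2 * θ) ≤
      L * h ^ (-2 * θ) * ((κ + 1) * h ^ 2) := fun x =>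
    (integral_mono_of_nonneg (Eventually.of_forall fun y => by positivity) (hgi x)
      (Eventually.of_forall fun y => hpt x y)).trans (hgint x)
  have hci : Integrable (fun _ : E2 => L * h ^ (-2 * θ) * ((κ + 1) * h ^ 2)) (volume.restrict G) :=
    integrableOn_const hGf enorm_ne_top
  refine (integral_mono_of_nonneg (Eventually.of_forall fun x => integral_nonneg fun y => by positivity)
    hci (Eventually.of_forall hin)).trans ?_
  simp only [integral_const, MeasurableSet.univ, measureReal_restrict_apply, univ_inter, hGr, smul_eq_mul]
  apply le_of_eq; ring

lemma comp_poly (A : E2 ≃L[ℝ] E2) (b : E2) (p : MvPolynomial (Fin 2) ℝ) (k : ℕ)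
    (hp : p.totalDegree ≤ k) : ∃ q : MvPolynomial (Fin 2) ℝ, q.totalDegree ≤ k ∧
      ∀ x, pfun q x = pfun p (A x + b) := by
  let l : Fin 2 → MvPolynomial (Fin 2) ℝ := fun i =>
    MvPolynomial.C (A (EuclideanSpace.single 0 1) i) * MvPolynomial.X 0 +
    MvPolynomial.C (A (EuclideanSpace.single 1 1) i) * MvPolynomial.X 1 + MvPolynomial.C (b i)
  have hl : ∀ i, (l i).totalDegree ≤ 1 := by
    intro i
    refine (MvPolynomial.totalDegree_add _ _).trans (max_le ?_ (by simp))
    refine (MvPolynomial.totalDegree_add _ _).trans (max_le ?_ ?_) <;>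
    · refine (MvPolynomial.totalDegree_mul _ _).trans (by simp)
  refine ⟨MvPolynomial.bind₁ l p, ?_, ?_⟩
  · rw [MvPolynomial.bind₁, MvPolynomial.aeval_def, MvPolynomial.eval₂_eq']
    refine MvPolynomial.totalDegree_finsetSum_le fun d hd => ?_
    refine (MvPolynomial.totalDegree_mul _ _).trans ?_
    have h1 : (∏ i, l i ^ d i).totalDegree ≤ ∑ i, d i := by
      refine (MvPolynomial.totalDegree_finsetProd _ _).trans (Finset.sum_le_sum fun i _ => ?_)
      refine (MvPolynomial.totalDegree_pow _ _).trans ?_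
      have := hl i
      nlinarith
    have h2 : ∑ i, d i ≤ k := by
      refine le_trans ?_ ((MvPolynomial.le_totalDegree hd).trans hp)
      rw [Finsupp.sum_fintype _ _ (fun _ => rfl)]
    simpa [MvPolynomial.algebraMap_eq] using h1.trans h2
  · intro x
    unfold pfun
    refine (MvPolynomial.eval₂Hom_bind₁ (RingHom.id ℝ) _ _ _).trans ?_
    have hy : x = x 0 • EuclideanSpace.single 0 (1:ℝ) + x 1 • EuclideanSpace.single 1 (1:ℝ) := by
      ext i; fin_cases i <;> simp
    have : (fun i => MvPolynomial.eval₂Hom (RingHom.id ℝ) (fun i => x i) (l i)) =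
        fun i => (A x + b) i := by
      ext i
      conv_rhs => rw [hy]
      simp [l]
      ring
    rw [this]
    rfl

lemma chg (A : E2 ≃L[ℝ] E2) (b : E2) (f : E2 → ℝ) :
    ∫ x in (fun x => A x + b) '' refTri, f x =
      |LinearMap.det (A : E2 →ₗ[ℝ] E2)| * ∫ x in refTri, f (A x + b) := by
  have := integral_image_eq_integral_abs_det_fderiv_smul volume refTri_open.measurableSet
    (f' := fun _ => (A : E2 →L[ℝ] E2))
    (fun x _ => ((A : E2 →L[ℝ] E2).hasFDerivAt.add_const b).hasFDerivWithinAt)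
    (fun x _ y _ h => A.injective (add_right_cancel h)) f
  refine this.trans ?_
  rw [← integral_const_mul]
  rfl

lemma volT (A : E2 ≃L[ℝ] E2) (b : E2) : volume ((fun x => A x + b) '' refTri) =
    ENNReal.ofReal |LinearMap.det (A : E2 →ₗ[ℝ] E2)| * volume refTri := by
  rw [← Measure.addHaar_image_continuousLinearEquiv]
  have : (fun x => A x + b) '' refTri = (fun x => x + b) '' (A '' refTri) := by
    rw [image_image]
  rw [this]
  simp

theorem cutoff_within_triangles (k : ℕ) (θ σ : ℝ) (hθ0 : 0 < θ) (hθ : θ < 1 / 2)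
    (hσ : 0 < σ) :
    ∃ C : ℝ, 0 < C ∧ ∀ (A : E2 ≃L[ℝ] E2) (b : E2),
      angleLB σ (fun i => A (refVert i) + b) →
      ∀ p : MvPolynomial (Fin 2) ℝ, p.totalDegree ≤ k →
        ((∫ x in (fun x => A x + b) '' refTri, (pfun p x) ^ 2) ≤
          C * ∫ x in (fun x => A x + b) '' refTri,
            (pfun p x) ^ 2 * etaBump incC incR (A.symm (x - b))) ∧
        Real.sqrt (∑ i : Fin 2, gagSq θ ((fun x => A x + b) '' refTri)
            (pd i fun x => pfun p x * etaBump incC incR (A.symm (x - b)))) ≤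
          C * Real.sqrt (volume ((fun x => A x + b) '' refTri)).toReal ^ (-1 - θ) *
            Real.sqrt (∫ x in (fun x => A x + b) '' refTri, (pfun p x) ^ 2) := by
  obtain ⟨C1, hC1, hpoly⟩ := poly_bd k
  obtain ⟨c2, hc2, hgeom⟩ := geom σ hσ
  obtain ⟨c3, hc3, hgag⟩ := gag_bound θ hθ0 hθ
  set m := (volume refTri).toReal with hm
  have hmfin : volume refTri ≠ ⊤ :=
    ((measure_mono refTri_sub).trans_lt (isCompact_closedBall _ _).measure_lt_top).ne
  have hm0 : 0 < m := by
    refine ENNReal.toReal_pos (refTri_open.measure_pos volume ⟨!₂[1/4, 1/4], ?_⟩).ne' hmfin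
    refine ⟨?_, ?_, ?_⟩ <;> norm_num
  set Kc := 2 * c3 * (C1 * c2 ^ 2) * m ^ 3 with hKc
  have hK0 : 0 < Kc := by positivity
  refine ⟨C1 + Real.sqrt Kc, by positivity, fun A b hA p hp => ?_⟩
  obtain ⟨q, hq, hqp⟩ := comp_poly A b p k hp
  obtain ⟨hq1, hq2⟩ := hpoly q hq
  set D := |LinearMap.det (A : E2 →ₗ[ℝ] E2)| with hD
  have hDpos : 0 < D := abs_pos.2 (LinearEquiv.isUnit_det' A.toLinearEquiv).ne_zero
  set G := (fun x => A x + b) '' refTri with hG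
  set Q := ∫ x in refTri, pfun q x ^ 2 with hQ
  have hQ0 : 0 ≤ Q := integral_nonneg fun x => sq_nonneg _
  have i1 : ∫ x in G, pfun p x ^ 2 = D * Q := by
    rw [hG, chg]; simp_rw [← hqp]
    rfl
  have i2 : ∫ x in G, pfun p x ^ 2 * etaBump incC incR (A.symm (x - b)) =
      D * ∫ x in refTri, pfun q x ^ 2 * eta x := by
    rw [hG, chg]; simp_rw [← hqp, add_sub_cancel_right, ContinuousLinearEquiv.symm_apply_apply]
    rfl
  have hN0 : 0 ≤ ∫ x in refTri, pfun q x ^ 2 * eta x :=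
    integral_nonneg fun x => mul_nonneg (sq_nonneg _) (eta_nonneg x)
  have hvol : volume G = ENNReal.ofReal (D * m) := by
    rw [hG, volT, ENNReal.ofReal_mul hDpos.le, hm, ENNReal.ofReal_toReal hmfin]
  rw [i1, i2]
  refine ⟨?_, ?_⟩
  · rw [mul_left_comm]
    gcongr
    refine hq1.trans ?_
    gcongr
    have := Real.sqrt_nonneg Kc
    linarith
  have hvr : (volume G).toReal = D * m := by
    rw [hvol, ENNReal.toReal_ofReal (by positivity)]
  rw [hvr]
  set h := Real.sqrt (D * m) with hh
  have hh0 : 0 < h := Real.sqrt_pos.2 (by positivity)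
  have hh2 : h ^ 2 = D * m := Real.sq_sqrt (by positivity)
  set g : E2 → ℝ := fun z => pfun q z * eta z with hg
  have hgs : ContDiff ℝ 2 g := (pfun_smooth q).mul eta_smooth
  have hw : (fun x => pfun p x * etaBump incC incR (A.symm (x - b))) =
      fun x => g (A.symm (x - b)) := by
    ext x
    simp only [hg, hqp, ContinuousLinearEquiv.apply_symm_apply, sub_add_cancel]
  have hpd : ∀ i x, pd i (fun x => g (A.symm (x - b))) x =
      fderiv ℝ g (A.symm (x - b)) (A.symm (EuclideanSpace.single i 1)) := by
    intro i x
    unfold pd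
    have h1 : HasFDerivAt (fun x => A.symm (x - b)) (A.symm : E2 →L[ℝ] E2) x :=
      (A.symm : E2 →L[ℝ] E2).hasFDerivAt.comp x ((hasFDerivAt_id x).sub_const b)
    have h2 := (hgs.differentiable (by norm_num) (A.symm (x - b))).hasFDerivAt.comp x h1
    have h3 := h2.fderiv
    simp only [Function.comp_def] at h3
    rw [h3]; rfl
  rw [hw]
  have hbound : ∀ i : Fin 2, gagSq θ G (pd i fun x => g (A.symm (x - b))) ≤
      c3 * (C1 * Q * (c2 / D) ^ 2) * h ^ 2 * (h ^ 2 * h ^ (-2 * θ)) := by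
    intro i
    refine hgag h hh0 G (by rw [hh2]; exact hvol) _ _ (by positivity) fun x y => ?_
    rw [hpd, hpd, ← sub_apply]
    have n1 := (fderiv ℝ g (A.symm (x - b)) - fderiv ℝ g (A.symm (y - b))).le_opNorm
      (A.symm (EuclideanSpace.single i 1))
    have n2 := hq2 (A.symm (x - b)) (A.symm (y - b))
    have n3 := hgeom A b hA (EuclideanSpace.single i 1)
    have n4 := hgeom A b hA (x - y)
    have n5 : dist (A.symm (x - b)) (A.symm (y - b)) = ‖A.symm (x - y)‖ := by
      rw [dist_eq_norm, ← map_sub, sub_sub_sub_cancel_right]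
    rw [n5] at n2
    have n6 : ‖(EuclideanSpace.single i 1 : E2)‖ = 1 := by simp
    rw [n6, one_pow, mul_one] at n3
    rw [← sq_abs, ← Real.norm_eq_abs]
    calc _ ≤ _ := pow_le_pow_left₀ (norm_nonneg _) n1 2
      _ = ‖fderiv ℝ g (A.symm (x - b)) - fderiv ℝ g (A.symm (y - b))‖ ^ 2 *
          ‖A.symm (EuclideanSpace.single i 1)‖ ^ 2 := mul_pow _ _ _
      _ ≤ (C1 * Q * (c2 / D * ‖x - y‖ ^ 2)) * (c2 / D) := by
        gcongr
        exact n2.trans (by gcongr)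
      _ = _ := by rw [dist_eq_norm]; ring
  have hsum : ∑ i : Fin 2, gagSq θ G (pd i fun x => g (A.symm (x - b))) ≤
      Kc * (h ^ (-1 - θ)) ^ 2 * (D * Q) := by
    rw [Fin.sum_univ_two]
    refine (add_le_add (hbound 0) (hbound 1)).trans (le_of_eq ?_)
    have hr : (h ^ (-1 - θ)) ^ 2 * h ^ 2 = h ^ (-2 * θ) := by
      rw [← Real.rpow_natCast (h ^ (-1 - θ)), ← Real.rpow_mul hh0.le, ← Real.rpow_natCast h,
        ← Real.rpow_add hh0]
      congr 1; push_cast; ring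
    rw [← hr, hKc]
    have : h ^ 2 * (h ^ 2 * ((h ^ (-1 - θ)) ^ 2 * h ^ 2)) =
      (h ^ 2) ^ 3 * (h ^ (-1 - θ)) ^ 2 := by ring
    rw [mul_assoc, this, hh2]
    field_simp
    ring
  refine (Real.sqrt_le_sqrt hsum).trans ?_
  rw [Real.sqrt_mul (by positivity), Real.sqrt_mul hK0.le, Real.sqrt_sq (by positivity)]
  gcongr
  linarith

end
end

section
/- Let k ∈ ℕ₀, 0 < θ < 1/2 and σ > 0. Let T̂₁ and T̂₂ be the closed triangles in ℝ² with vertices (0,0), (1,0), (0,−1) and (0,0), (1,0), (0,1) respectively, let Ê be their common edge (the segment from (0,0) to (1,0)) and let B̂ be the ball of maximal radius contained in the interior of T̂₁ ∪ T̂₂, with center ẑ and radius r̂; define η_{B̂}(x) := exp(1/(|x − ẑ|²/r̂² − 1)) if |x − ẑ| < r̂ and η_{B̂}(x) := 0 otherwise. There exists a constant C, depending only on θ, k and σ, with the following property. Let T₁, T₂ be two closed nondegenerate triangles with minimum interior angle ≥ σ whose intersection E := T₁ ∩ T₂ is a common edge of both, of length h_E, and let F : T̂₁ ∪ T̂₂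 → T₁ ∪ T₂ be a continuous bijection that is affine on each T̂ᵢ with F(T̂ᵢ) = Tᵢ; set η_E := η_{B̂} ∘ F^{−1}. For any polynomial p in one real variable of degree ≤ k, define v : T₁ ∪ T₂ → ℝ by v := V̂ ∘ F^{−1}, where V̂(x₁, x₂) := p(x₁). Then ∫_E v² dH¹ ≤ C · ∫_E v² η_E dH¹, and for i = 1, 2: |∇(v·η_E)|_{θ, int Tᵢ} ≤ C · h_E^{−1−θ} · ‖v·η_E‖_{L²(Tᵢ)} and ‖v·η_E‖_{L²(Tᵢ)} ≤ C · h_E^{1/2} · (∫_E v² dH¹)^{1/2}, where H¹ is the 1-dimensional Hausdorff measure, the gradient is taken on the interior of each Tᵢ, and |∇w|_{θ,G} := (|∂₁w|²_{θ,G} + |∂₂w|²_{θ,G})^{1/2}. -/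
open MeasureTheory Metric Set Filter
open scoped Topology NNReal ENNReal

noncomputable section

/-- The vertices of the two reference triangles forming the reference edge patch. -/
def kiteVert (i : Fin 2) : Fin 3 → E2 :=
  ![0, EuclideanSpace.single 0 1, EuclideanSpace.single 1 (if i = 0 then (-1 : ℝ) else 1)]

/-- The two closed reference triangles `T̂₁`, `T̂₂` sharing the edge `Ê`. -/
def kiteTri (i : Fin 2) : Set E2 := convexHull ℝ (Set.range (kiteVert i))

/-- The reference edge `Ê` from `(0,0)` to `(1,0)`. -/
def refEdge : Set E2 := segment ℝ 0 (EuclideanSpace.single 0 1)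

/-- The center of the maximal ball contained in the interior of `T̂₁ ∪ T̂₂`. -/
def kiteC : E2 := EuclideanSpace.single 0 (Real.sqrt 2 - 1)

/-- The radius of the maximal ball contained in the interior of `T̂₁ ∪ T̂₂`. -/
def kiteR : ℝ := Real.sqrt 2 - 1


/-! Helper material -/

lemma kiteR_pos : 0 < kiteR := by
  unfold kiteR
  have : (1:ℝ) < Real.sqrt 2 := by
    rw [Real.lt_sqrt] <;> norm_num
  linarith

lemma kiteR_bounds : 0.41 < kiteR ∧ kiteR < 0.42 := by
  unfold kiteR
  constructor
  · have : (1.41:ℝ) < Real.sqrt 2 := by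
      rw [Real.lt_sqrt] <;> norm_num
    linarith
  · have : Real.sqrt 2 < (1.42:ℝ) := by
      rw [Real.sqrt_lt'] <;> norm_num
    linarith

lemma eta_eq (x : E2) : etaBump kiteC kiteR x =
    expNegInvGlue (1 - ‖x - kiteC‖ ^ 2 / kiteR ^ 2) := by
  have hr := kiteR_pos
  unfold etaBump expNegInvGlue
  rw [dist_eq_norm]
  by_cases h : ‖x - kiteC‖ < kiteR
  · have : ‖x - kiteC‖ ^ 2 / kiteR ^ 2 < 1 := by
      rw [div_lt_one (by positivity)]
      gcongr
    rw [if_pos h, if_neg (by linarith)]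
    congr 1
    rw [one_div, ← inv_neg]
    congr 1
    ring
  · have : 1 ≤ ‖x - kiteC‖ ^ 2 / kiteR ^ 2 := by
      rw [one_le_div (by positivity)]
      push Not at h
      gcongr
    rw [if_neg h, if_pos (by linarith)]

lemma eta_contDiff : ContDiff ℝ 2 (etaBump kiteC kiteR) := by
  have : etaBump kiteC kiteR = fun x => expNegInvGlue (1 - ‖x - kiteC‖ ^ 2 / kiteR ^ 2) :=
    funext eta_eq
  rw [this]
  have h := expNegInvGlue.contDiff (n := 2)
  refine ContDiff.comp (g := expNegInvGlue) (n := 2) (by exact_mod_cast h) ?_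
  exact contDiff_const.sub (((contDiff_id.sub contDiff_const).norm_sq ℝ).div_const _)

lemma eta_nonneg_s13 (x : E2) : 0 ≤ etaBump kiteC kiteR x := by
  rw [eta_eq]; exact expNegInvGlue.nonneg _

lemma eta_pos_s13 {x : E2} (h : ‖x - kiteC‖ < kiteR) : 0 < etaBump kiteC kiteR x := by
  unfold etaBump
  rw [dist_eq_norm, if_pos h]
  exact Real.exp_pos _

lemma eta_hcs : HasCompactSupport (etaBump kiteC kiteR) := by
  refine HasCompactSupport.intro (isCompact_closedBall kiteC kiteR) fun x hx => ?_
  unfold etaBump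
  rw [if_neg]
  simp only [mem_closedBall] at hx
  linarith

/-- polynomial with coefficients -/
def pa {k : ℕ} (a : Fin (k+1) → ℝ) (t : ℝ) : ℝ := ∑ j, a j * t ^ (j:ℕ)

def Wf {k : ℕ} (a : Fin (k+1) → ℝ) (x : E2) : ℝ := pa a (x 0) * etaBump kiteC kiteR x

lemma pa_smul {k : ℕ} (a : Fin (k+1) → ℝ) (c t : ℝ) : pa (c • a) t = c * pa a t := by
  simp [pa, Finset.mul_sum, mul_assoc]

lemma pa_cont {k : ℕ} : Continuous (fun z : (Fin (k+1) → ℝ) × ℝ => pa z.1 z.2) := by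
  unfold pa; fun_prop

lemma pa_ne {k : ℕ} (a : Fin (k+1) → ℝ) (ha : a ≠ 0) (l u : ℝ) (hlu : l < u) :
    ∃ t ∈ Ioo l u, pa a t ≠ 0 := by
  by_contra! hcon
  apply ha
  set P : Polynomial ℝ := ∑ j : Fin (k+1), Polynomial.C (a j) * Polynomial.X ^ (j:ℕ) with hP
  have h0 : P = 0 := by
    apply Polynomial.eq_zero_of_infinite_isRoot
    refine (Ioo_infinite hlu).mono fun t ht => ?_
    have := hcon t ht
    simp only [mem_ofPred_eq, Polynomial.IsRoot.def, hP, Polynomial.eval_finsetSum]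
    simpa [pa] using this
  ext j
  have : P.coeff j = a j := by
    rw [hP, Polynomial.finsetSum_coeff]
    rw [Finset.sum_eq_single j]
    · simp
    · intro b _ hb
      rw [Polynomial.coeff_C_mul_X_pow, if_neg]
      intro h; exact hb (Fin.ext h.symm)
    · simp
  rw [← this, h0]; simp

lemma quad_lower {k : ℕ} (Q : (Fin (k+1) → ℝ) → ℝ) (hc : Continuous Q)
    (hs : ∀ (c : ℝ) a, Q (c • a) = c ^ 2 * Q a) (hp : ∀ a, a ≠ 0 → 0 < Q a) :
    ∃ c > 0, ∀ a, c * ‖a‖ ^ 2 ≤ Q a := by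
  obtain ⟨b, hb, hmin⟩ := (isCompact_sphere (0 : Fin (k+1) → ℝ) 1).exists_isMinOn
    ((NormedSpace.sphere_nonempty (x := (0 : Fin (k+1) → ℝ)) (r := 1)).2 zero_le_one)
    hc.continuousOn
  have hb1 : ‖b‖ = 1 := by simpa using hb
  refine ⟨Q b, hp b (by rintro rfl; simp at hb1), fun a => ?_⟩
  by_cases ha : a = 0
  · subst ha
    have := hs 0 0
    simp at this
    simp [this]
  have hn : 0 < ‖a‖ := norm_pos_iff.2 ha
  have h1 : Q b ≤ Q (‖a‖⁻¹ • a) := hmin (by simp [norm_smul, hn.ne'])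
  rw [hs] at h1
  calc Q b * ‖a‖ ^ 2 ≤ ((‖a‖⁻¹) ^ 2 * Q a) * ‖a‖ ^ 2 := by gcongr
    _ = Q a := by field_simp

lemma quad_upper {k : ℕ} (Q : (Fin (k+1) → ℝ) → ℝ) (hc : Continuous Q)
    (hs : ∀ (c : ℝ) a, Q (c • a) = c ^ 2 * Q a) :
    ∃ c > 0, ∀ a, Q a ≤ c * ‖a‖ ^ 2 := by
  obtain ⟨b, hb, hmax⟩ := (isCompact_sphere (0 : Fin (k+1) → ℝ) 1).exists_isMaxOn
    ((NormedSpace.sphere_nonempty (x := (0 : Fin (k+1) → ℝ)) (r := 1)).2 zero_le_one)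
    hc.continuousOn
  refine ⟨|Q b| + 1, by positivity, fun a => ?_⟩
  by_cases ha : a = 0
  · subst ha
    have := hs 0 0
    simp at this
    simp [this]
  have hn : 0 < ‖a‖ := norm_pos_iff.2 ha
  have h1 : Q (‖a‖⁻¹ • a) ≤ Q b := hmax (by simp [norm_smul, hn.ne'])
  rw [hs] at h1
  calc Q a = ((‖a‖⁻¹) ^ 2 * Q a) * ‖a‖ ^ 2 := by field_simp
    _ ≤ Q b * ‖a‖ ^ 2 := by gcongr
    _ ≤ (|Q b| + 1) * ‖a‖ ^ 2 := by
      gcongr; linarith [le_abs_self (Q b)]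

lemma kite_compact (i : Fin 2) : IsCompact (kiteTri i) :=
  (Set.finite_range _).isCompact_convexHull ℝ

def sg (i : Fin 2) : ℝ := if i = 0 then -1 else 1

lemma sg_sq (i : Fin 2) : sg i * sg i = 1 := by unfold sg; split_ifs <;> norm_num

lemma kite_mem (i : Fin 2) (x : E2) (h0 : 0 ≤ x 0) (h1 : 0 ≤ sg i * x 1)
    (h2 : x 0 + sg i * x 1 ≤ 1) : x ∈ kiteTri i := by
  have hc : Convex ℝ (kiteTri i) := convex_convexHull ℝ _
  have hv : ∀ j, kiteVert i j ∈ kiteTri i := fun j => subset_convexHull ℝ _ ⟨j, rfl⟩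
  have := hc.sum_mem (t := Finset.univ) (w := ![1 - x 0 - sg i * x 1, x 0, sg i * x 1])
    (z := kiteVert i) (by intro j _; fin_cases j <;> simp <;> linarith)
    (by simp [Fin.sum_univ_three]; ring) (fun j _ => hv j)
  convert this using 1
  ext j
  have hs := sg_sq i
  simp only [Fin.sum_univ_three, kiteVert]
  change _ = _
  have e : (if i = 0 then (-1:ℝ) else 1) = sg i := rfl
  rw [e]
  fin_cases j
  · simp
  · simp; linear_combination (-x 1) * hs

lemma refEdge_eq : refEdge = (fun t : ℝ => t • (EuclideanSpace.single 0 1 : E2)) '' Icc 0 1 := by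
  unfold refEdge
  rw [segment_eq_image]
  simp

lemma edge_sub (i : Fin 2) : refEdge ⊆ kiteTri i := by
  rw [refEdge_eq]
  rintro _ ⟨t, ht, rfl⟩
  apply kite_mem <;> simp [ht.1, ht.2]

lemma kite_bdd (i : Fin 2) : kiteTri i ⊆ closedBall 0 1 := by
  apply convexHull_min _ (convex_closedBall _ _)
  rintro _ ⟨j, rfl⟩
  fin_cases j <;> simp [kiteVert]
  split_ifs <;> simp

def e0 : E2 := EuclideanSpace.single 0 1

def Q1 {k : ℕ} (a : Fin (k+1) → ℝ) : ℝ := ∫ t in Icc (0:ℝ) 1, pa a t ^ 2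
def Q2 {k : ℕ} (a : Fin (k+1) → ℝ) : ℝ :=
  ∫ t in Icc (0:ℝ) 1, pa a t ^ 2 * etaBump kiteC kiteR (t • e0)
def Q3 {k : ℕ} (i : Fin 2) (a : Fin (k+1) → ℝ) : ℝ := ∫ x in kiteTri i, Wf a x ^ 2

lemma eta_cont : Continuous (etaBump kiteC kiteR) := eta_contDiff.continuous

lemma Q1_cont {k : ℕ} : Continuous (Q1 (k := k)) := by
  apply continuous_parametric_integral_of_continuous _ isCompact_Icc
  exact pa_cont.pow 2

lemma Q2_cont {k : ℕ} : Continuous (Q2 (k := k)) := by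
  apply continuous_parametric_integral_of_continuous _ isCompact_Icc
  exact (pa_cont.pow 2).mul (eta_cont.comp (continuous_snd.smul continuous_const))

lemma Wf_cont {k : ℕ} : Continuous (fun z : (Fin (k+1) → ℝ) × E2 => Wf z.1 z.2) := by
  have h : Continuous (fun z : (Fin (k+1) → ℝ) × E2 => (z.1, z.2 0)) := by fun_prop
  exact (pa_cont.comp h).mul (eta_cont.comp continuous_snd)

lemma Q3_cont {k : ℕ} (i : Fin 2) : Continuous (Q3 (k := k) i) := by
  apply continuous_parametric_integral_of_continuous _ (kite_compact i)
  exact Wf_cont.pow 2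

lemma Q1_smul {k : ℕ} (c : ℝ) (a : Fin (k+1) → ℝ) : Q1 (c • a) = c ^ 2 * Q1 a := by
  unfold Q1
  rw [← integral_const_mul]
  congr 1; ext t; rw [pa_smul]; ring

lemma Q2_smul {k : ℕ} (c : ℝ) (a : Fin (k+1) → ℝ) : Q2 (c • a) = c ^ 2 * Q2 a := by
  unfold Q2
  rw [← integral_const_mul]
  congr 1; ext t; rw [pa_smul]; ring

lemma Q3_smul {k : ℕ} (i : Fin 2) (c : ℝ) (a : Fin (k+1) → ℝ) :
    Q3 i (c • a) = c ^ 2 * Q3 i a := by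
  unfold Q3
  rw [← integral_const_mul]
  congr 1; ext t; rw [Wf, Wf, pa_smul]; ring

lemma pos_aux {X : Type*} [TopologicalSpace X] [MeasurableSpace X] [OpensMeasurableSpace X]
    (μ : Measure X) [μ.IsOpenPosMeasure] [IsFiniteMeasureOnCompacts μ]
    [SecondCountableTopologyEither X ℝ] [T2Space X]
    (f : X → ℝ) (hf : Continuous f) (h0 : ∀ x, 0 ≤ f x) (s U : Set X) (hs : IsCompact s)
    (hU : IsOpen U) (hUs : U ⊆ s) (x : X) (hx : x ∈ U) (hfx : f x ≠ 0) :
    0 < ∫ y in s, f y ∂μ := by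
  rw [setIntegral_pos_iff_support_of_nonneg_ae (Eventually.of_forall h0)
    (hf.continuousOn.integrableOn_compact' hs hs.measurableSet)]
  have ho : IsOpen (Function.support f ∩ U) := hf.isOpen_support.inter hU
  exact (ho.measure_pos μ ⟨x, hfx, hx⟩).trans_le (measure_mono (inter_subset_inter_right _ hUs))

lemma Q1_pos {k : ℕ} (a : Fin (k+1) → ℝ) (ha : a ≠ 0) : 0 < Q1 a := by
  obtain ⟨t, ht, hne⟩ := pa_ne a ha 0 1 one_pos
  have hc : Continuous (pa a) := pa_cont.comp (Continuous.prodMk_right a)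
  exact pos_aux volume (fun t => pa a t ^ 2) (hc.pow 2) (fun t => sq_nonneg _) _ (Ioo 0 1)
    isCompact_Icc isOpen_Ioo Ioo_subset_Icc_self t ht (pow_ne_zero _ hne)

lemma dist_c (x : E2) : ‖x - kiteC‖ ^ 2 = (x 0 - kiteR) ^ 2 + x 1 ^ 2 := by
  rw [EuclideanSpace.real_norm_sq_eq]
  simp [Fin.sum_univ_two, kiteC, kiteR]

lemma eta_pos' {x : E2} (h : x 0 ∈ Ioo (0.3:ℝ) 0.5) (h1 : |x 1| ≤ 0.1) :
    0 < etaBump kiteC kiteR x := by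
  apply eta_pos_s13
  have hr := kiteR_bounds
  apply lt_of_pow_lt_pow_left₀ 2 (by linarith [hr.1])
  rw [dist_c]
  obtain ⟨h2, h3⟩ := abs_le.1 h1
  obtain ⟨h4, h5⟩ := h
  nlinarith

lemma Q2_pos {k : ℕ} (a : Fin (k+1) → ℝ) (ha : a ≠ 0) : 0 < Q2 a := by
  obtain ⟨t, ht, hne⟩ := pa_ne a ha 0.3 0.5 (by norm_num)
  have hc : Continuous (pa a) := pa_cont.comp (Continuous.prodMk_right a)
  have he : Continuous fun t : ℝ => etaBump kiteC kiteR (t • e0) :=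
    eta_cont.comp (continuous_id.smul continuous_const)
  refine pos_aux volume (fun t => pa a t ^ 2 * etaBump kiteC kiteR (t • e0)) ((hc.pow 2).mul he)
    (fun t => mul_nonneg (sq_nonneg _) (eta_nonneg_s13 _)) _ (Ioo 0 1)
    isCompact_Icc isOpen_Ioo Ioo_subset_Icc_self t ⟨by linarith [ht.1], by linarith [ht.2]⟩ ?_
  refine mul_ne_zero (pow_ne_zero _ hne) (eta_pos' ?_ ?_).ne'
  · simpa [e0] using ht
  · simp [e0]; norm_num

lemma Q3_pos {k : ℕ} (i : Fin 2) (a : Fin (k+1) → ℝ) (ha : a ≠ 0) : 0 < Q3 i a := by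
  obtain ⟨t, ht, hne⟩ := pa_ne a ha 0.3 0.5 (by norm_num)
  have hc : Continuous (Wf a) := Wf_cont.comp (Continuous.prodMk_right a)
  set x : E2 := !₂[t, sg i * 0.1] with hx
  have hx0 : x 0 = t := by simp [hx]
  have hx1 : x 1 = sg i * 0.1 := by simp [hx]
  have hs := sg_sq i
  refine pos_aux volume (fun y => Wf a y ^ 2) (hc.pow 2)
    (fun t => sq_nonneg _) _ {y : E2 | 0 < y 0 ∧ 0 < sg i * y 1 ∧ y 0 + sg i * y 1 < 1}
    (kite_compact i) ?_ ?_ x ?_ ?_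
  · refine IsOpen.and ?_ (IsOpen.and ?_ ?_)
    · exact isOpen_lt (by fun_prop) (by fun_prop)
    · exact isOpen_lt (by fun_prop) (by fun_prop)
    · exact isOpen_lt (by fun_prop) (by fun_prop)
  · rintro y ⟨h1, h2, h3⟩
    exact kite_mem i y h1.le h2.le h3.le
  · obtain ⟨h1, h2⟩ := ht
    refine ⟨?_, ?_, ?_⟩
    · rw [hx0]; linarith
    · rw [hx1, ← mul_assoc, hs]; norm_num
    · rw [hx1, ← mul_assoc, hs, hx0]; linarith
  · apply pow_ne_zero
    refine mul_ne_zero (by rwa [hx0]) (eta_pos' (by rwa [hx0]) ?_).ne'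
    rw [hx1]
    unfold sg
    split_ifs <;> norm_num [abs_le]

open scoped Pointwise in
/-- edge integrals -/
lemma edge_integral (A : E2 →ᵃ[ℝ] E2) (h : ℝ) (hh : h = dist (A 0) (A e0)) (hpos : 0 < h)
    (f : E2 → ℝ) :
    ∫ y in A '' refEdge, f y ∂(μH[1]) = h * ∫ t in Icc (0:ℝ) 1, f (A (t • e0)) := by
  set u : E2 := A.linear e0 with hu
  have hA : ∀ t : ℝ, A (t • e0) = A 0 + t • u := by
    intro t
    have := A.map_vadd 0 (t • e0)
    simp only [vadd_eq_add, add_zero, map_smul] at this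
    rw [this, add_comm]
  have hnu : ‖u‖ = h := by
    have := hA 1
    rw [one_smul, one_smul] at this
    rw [hh, this, dist_eq_norm]; simp
  set ι : ℝ → E2 := fun s => A 0 + s • (h⁻¹ • u) with hι
  have hiso : Isometry ι := by
    refine Isometry.of_dist_eq fun s t => ?_
    rw [hι]
    simp only [dist_add_left]
    rw [dist_eq_norm, ← sub_smul, norm_smul, norm_smul, hnu, norm_inv, Real.norm_of_nonneg hpos.le,
      inv_mul_cancel₀ hpos.ne', mul_one, dist_eq_norm]
  have hme : MeasurableEmbedding ι := hiso.isClosedEmbedding.measurableEmbedding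
  have hset : A '' refEdge = ι '' Icc 0 h := by
    rw [refEdge_eq, image_image]
    ext y
    constructor
    · rintro ⟨t, ht, rfl⟩
      refine ⟨h * t, ⟨mul_nonneg hpos.le ht.1, by nlinarith [ht.2]⟩, ?_⟩
      change _ = A (t • e0)
      rw [hA, hι]
      simp only [smul_smul]
      congr 2; field_simp
    · rintro ⟨t, ht, rfl⟩
      refine ⟨h⁻¹ * t, ⟨mul_nonneg (by positivity) ht.1, ?_⟩, ?_⟩
      · rw [inv_mul_le_one₀ hpos]; exact ht.2
      change A ((h⁻¹ * t) • e0) = _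
      rw [hA, hι]
      simp only [smul_smul]
      congr 2; ring
  have hmap := hiso.map_hausdorffMeasure (d := 1) (Or.inl zero_le_one)
  rw [hausdorffMeasure_real] at hmap
  have h1 : ∫ y in A '' refEdge, f y ∂(μH[1]) = ∫ s in Icc 0 h, f (ι s) := by
    have h2 := hme.setIntegral_map (μ := volume) f (ι '' Icc 0 h)
    rw [hmap, preimage_image_eq _ hiso.injective, Measure.restrict_restrict_of_subset
      (image_subset_range _ _), ← hset] at h2
    exact h2
  rw [h1]
  have h3 := Measure.setIntegral_comp_smul_of_pos (volume : Measure ℝ) (fun s => f (ι s))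
    (Icc (0:ℝ) 1) hpos
  have h4 : h • Icc (0:ℝ) 1 = Icc 0 h := by
    rw [LinearOrderedField.smul_Icc hpos]; simp
  rw [h4] at h3
  simp only [Module.finrank_self, pow_one, smul_eq_mul] at h3
  have h5 : ∀ t : ℝ, ι (h * t) = A (t • e0) := by
    intro t
    rw [hA, hι]
    simp only [smul_smul]
    congr 2; field_simp
  simp only [h5] at h3
  rw [h3]
  field_simp

lemma sing_int (θ : ℝ) (hθ : θ < 1/2) :
    IntegrableOn (fun z : E2 => ‖z‖ ^ (-(2 * θ))) (ball 0 3) := by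
  refine integrableOn_ball_of_norm_le_rpow (C := 1) (α := 2 * θ) (by simp) (by simp; linarith) ?_ ?_
  · refine Eventually.of_forall fun x => ?_
    rw [one_mul, Real.norm_of_nonneg (by positivity)]
  · exact (measurable_norm.pow_const _).aestronglyMeasurable

lemma sing_bound (θ : ℝ) (hθ : θ < 1/2) :
    ∃ K > 0, ∀ (i : Fin 2) (U : Set E2), MeasurableSet U → U ⊆ kiteTri i → ∀ x ∈ U,
      IntegrableOn (fun y : E2 => ‖x - y‖ ^ (-(2 * θ))) U ∧
      ∫ y in U, ‖x - y‖ ^ (-(2 * θ)) ≤ K := by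
  set ψ : E2 → ℝ := (ball 0 3).indicator (fun z : E2 => ‖z‖ ^ (-(2 * θ))) with hψ
  have hi : Integrable ψ := (integrable_indicator_iff measurableSet_ball).2 (sing_int θ hθ)
  have h0 : ∀ z, 0 ≤ ψ z := fun z => indicator_nonneg (fun _ _ => by positivity) z
  refine ⟨|∫ z, ψ z| + 1, by positivity, fun i U hm hU x hx => ?_⟩
  have hix : Integrable (fun y => ψ (x - y)) := hi.comp_sub_left x
  have heq : ∀ y ∈ U, ψ (x - y) = ‖x - y‖ ^ (-(2 * θ)) := by
    intro y hy
    rw [hψ, indicator_of_mem]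
    have h1 := kite_bdd i (hU hx)
    have h2 := kite_bdd i (hU hy)
    simp only [mem_closedBall, dist_zero_right, mem_ball] at *
    linarith [norm_sub_le x y]
  constructor
  · exact (hix.integrableOn (s := U)).congr_fun heq hm
  · rw [← setIntegral_congr_fun hm heq]
    calc ∫ y in U, ψ (x - y) ≤ ∫ y, ψ (x - y) :=
          setIntegral_le_integral hix (Eventually.of_forall fun y => h0 _)
      _ = ∫ y, ψ y := integral_sub_left_eq_self ψ volume x
      _ ≤ _ := by linarith [le_abs_self (∫ y, ψ y)]

lemma Wf_lip (k : ℕ) : ∃ L > 0, ∀ (a : Fin (k+1) → ℝ), Differentiable ℝ (Wf a) ∧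
    ∀ x y, ‖fderiv ℝ (Wf a) x - fderiv ℝ (Wf a) y‖ ≤ L * ‖a‖ * ‖x - y‖ := by
  set g : Fin (k+1) → E2 → ℝ := fun j x => x 0 ^ (j:ℕ) * etaBump kiteC kiteR x with hg
  have hx0 : ContDiff ℝ 2 (fun x : E2 => x 0) := by fun_prop
  have hgc : ∀ j, ContDiff ℝ 2 (g j) := fun j => (hx0.pow _).mul eta_contDiff
  have hgs : ∀ j, HasCompactSupport (g j) := fun j => eta_hcs.mul_left
  have hl : ∀ j, ∃ C, LipschitzWith C (fderiv ℝ (g j)) := fun j =>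
    ContDiff.lipschitzWith_of_hasCompactSupport ((hgs j).fderiv ℝ)
      ((hgc j).fderiv_right (m := 1) (by norm_num)) one_ne_zero
  choose C hC using hl
  have hgd : ∀ j, Differentiable ℝ (g j) := fun j => (hgc j).differentiable (by norm_num)
  refine ⟨∑ j, (C j : ℝ) + 1, by positivity, fun a => ?_⟩
  have hW : Wf a = fun x => ∑ j, a j * g j x := by
    ext x
    simp only [Wf, pa, Finset.sum_mul, hg, mul_assoc]
  have hd : ∀ x, HasFDerivAt (Wf a) (∑ j, a j • fderiv ℝ (g j) x) x := by
    intro x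
    rw [hW]
    exact HasFDerivAt.fun_sum fun j _ => ((hgd j x).hasFDerivAt.const_mul (a j))
  refine ⟨fun x => (hd x).differentiableAt, fun x y => ?_⟩
  rw [(hd x).fderiv, (hd y).fderiv, ← Finset.sum_sub_distrib]
  calc ‖∑ j, (a j • fderiv ℝ (g j) x - a j • fderiv ℝ (g j) y)‖
      ≤ ∑ j, ‖a j • fderiv ℝ (g j) x - a j • fderiv ℝ (g j) y‖ := norm_sum_le _ _
    _ ≤ ∑ j, ‖a‖ * (C j * ‖x - y‖) := by
      refine Finset.sum_le_sum fun j _ => ?_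
      rw [← smul_sub, norm_smul]
      gcongr
      · exact norm_le_pi_norm a j
      · have := (hC j).dist_le_mul x y
        rwa [dist_eq_norm, dist_eq_norm] at this
    _ = (∑ j, (C j : ℝ)) * ‖a‖ * ‖x - y‖ := by
      simp only [Finset.sum_mul]
      refine Finset.sum_congr rfl fun j _ => by ring
    _ ≤ _ := by gcongr; linarith

lemma F_eq (F : E2 →ᵃ[ℝ] E2) (x : E2) : F x = F.linear x + F 0 := by
  have := F.map_vadd 0 x
  simpa only [vadd_eq_add, add_zero] using this

lemma geom_s13 (σ : ℝ) (hσ : 0 < σ) : ∃ m > 0, ∃ M > 0, ∀ (i : Fin 2) (F : E2 →ᵃ[ℝ] E2),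
    Function.Injective F → angleLB σ (fun j => F (kiteVert i j)) →
    ∀ x, m * dist (F 0) (F e0) * ‖x‖ ≤ ‖F.linear x‖ ∧
      ‖F.linear x‖ ≤ M * dist (F 0) (F e0) * ‖x‖ := by
  have key : ∀ (i : Fin 2) (F : E2 →ᵃ[ℝ] E2),
    Function.Injective F → angleLB σ (fun j => F (kiteVert i j)) →
    σ ≤ Real.pi / 3 ∧ ∃ u w : E2, dist (F 0) (F e0) = ‖u‖ ∧
      (∀ x, F.linear x = x 0 • u + (sg i * x 1) • w) ∧
      |inner ℝ u w| ≤ Real.cos σ * (‖u‖ * ‖w‖) ∧ Real.sin σ * ‖u‖ ≤ ‖w‖ ∧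
        Real.sin σ * ‖w‖ ≤ ‖u‖ := by
    intro i F hF ha
    set p2 : E2 := EuclideanSpace.single 1 (sg i) with hp2
    have a0 : σ ≤ EuclideanGeometry.angle (F e0) (F 0) (F p2) := ha 0
    have a1 : σ ≤ EuclideanGeometry.angle (F p2) (F e0) (F 0) := ha 1
    have a2 : σ ≤ EuclideanGeometry.angle (F 0) (F p2) (F e0) := ha 2
    have hne : F e0 ≠ F 0 := by
      intro h
      have h1 := hF h
      have h2 := congrArg (fun z : E2 => z 0) h1
      simp [e0] at h2
    have hsum := EuclideanGeometry.angle_add_angle_add_angle_eq_pi (F p2) hne.symm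
    have hsin := EuclideanGeometry.law_sin (F p2) (F e0) (F 0)
    set α := EuclideanGeometry.angle (F e0) (F 0) (F p2) with hα
    set β := EuclideanGeometry.angle (F p2) (F e0) (F 0) with hβ
    set γ := EuclideanGeometry.angle (F 0) (F p2) (F e0) with hγ
    have hs3 : α + β + γ = Real.pi := by linarith
    have hσ3 : σ ≤ Real.pi / 3 := by linarith
    have hpi := Real.pi_pos
    have hge : ∀ t, σ ≤ t → t ≤ Real.pi - σ → Real.sin σ ≤ Real.sin t := by
      intro t h1 h2
      rcases le_total t (Real.pi / 2) with h | h
      · exact Real.sin_le_sin_of_le_of_le_pi_div_two (by linarith) h h1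
      · rw [← Real.sin_pi_sub t]
        exact Real.sin_le_sin_of_le_of_le_pi_div_two (by linarith) (by linarith) (by linarith)
    have hcos : |Real.cos α| ≤ Real.cos σ := by
      rw [abs_le]
      constructor
      · rw [← Real.cos_pi_sub]
        exact Real.cos_le_cos_of_nonneg_of_le_pi (by linarith) (by linarith) (by linarith)
      · exact Real.cos_le_cos_of_nonneg_of_le_pi (by linarith) (by linarith) (by linarith)
    have hsβ := hge β a1 (by linarith)
    have hsγ := hge γ a2 (by linarith)
    refine ⟨hσ3, F e0 - F 0, F p2 - F 0, ?_, ?_, ?_, ?_, ?_⟩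
    · rw [dist_comm, dist_eq_norm]
    · intro x
      rw [F_eq F e0, F_eq F p2, add_sub_cancel_right, add_sub_cancel_right, ← map_smul,
        ← map_smul, ← map_add]
      congr 1
      have hs := sg_sq i
      ext j
      fin_cases j
      · simp [e0, hp2]
      · simp [e0, hp2]; linear_combination (-x 1) * hs
    · rw [← InnerProductGeometry.cos_angle_mul_norm_mul_norm, abs_mul]
      have : InnerProductGeometry.angle (F e0 - F 0) (F p2 - F 0) = α := rfl
      rw [this, abs_of_nonneg (a := ‖_‖ * ‖_‖) (by positivity)]
      gcongr
    · rw [dist_eq_norm, dist_comm, dist_eq_norm] at hsin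
      have := Real.sin_le_one γ
      calc _ ≤ Real.sin β * ‖F e0 - F 0‖ := by gcongr
        _ = _ := hsin
        _ ≤ _ := mul_le_of_le_one_left (norm_nonneg _) this
    · rw [dist_eq_norm, dist_comm, dist_eq_norm] at hsin
      have := Real.sin_le_one β
      calc _ ≤ Real.sin γ * ‖F p2 - F 0‖ := by gcongr
        _ = _ := hsin.symm
        _ ≤ _ := mul_le_of_le_one_left (norm_nonneg _) this
  have hpi := Real.pi_pos
  by_cases h3 : σ ≤ Real.pi / 3
  swap
  · exact ⟨1, one_pos, 1, one_pos, fun i F hF ha => absurd (key i F hF ha).1 h3⟩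
  have hs : 0 < Real.sin σ := Real.sin_pos_of_pos_of_lt_pi hσ (by linarith)
  have hs1 := Real.sin_le_one σ
  have hk : Real.cos σ < 1 := by
    rw [← Real.cos_zero]
    exact Real.cos_lt_cos_of_nonneg_of_le_pi le_rfl (by linarith) hσ
  have hk0 : 0 ≤ Real.cos σ := Real.cos_nonneg_of_neg_pi_div_two_le_of_le (by linarith) (by linarith)
  set s := Real.sin σ
  set κ := Real.cos σ
  refine ⟨s * Real.sqrt (1 - κ), mul_pos hs (Real.sqrt_pos.2 (by linarith)), 1 + 1 / s,
    by positivity, fun i F hF ha x => ?_⟩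
  obtain ⟨-, u, w, hu, hlin, hin, huw, hwu⟩ := key i F hF ha
  rw [hu, hlin]
  set y := sg i * x 1 with hy
  have hy2 : y ^ 2 = x 1 ^ 2 := by rw [hy]; linear_combination (x 1 ^ 2) * sg_sq i
  have hx2 : ‖x‖ ^ 2 = x 0 ^ 2 + y ^ 2 := by
    rw [EuclideanSpace.real_norm_sq_eq, Fin.sum_univ_two, hy2]
  constructor
  · apply le_of_sq_le_sq _ (norm_nonneg _)
    rw [norm_add_sq_real, norm_smul, norm_smul, inner_smul_left, inner_smul_right]
    simp only [conj_trivial, mul_pow, hx2, Real.sq_sqrt (show 0 ≤ 1 - κ by linarith),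
      Real.norm_eq_abs, sq_abs]
    have h1 : |x 0 * (y * inner ℝ u w)| ≤ κ * ((|x 0| * ‖u‖) * (|y| * ‖w‖)) := by
      rw [abs_mul, abs_mul]
      calc _ ≤ |x 0| * (|y| * (κ * (‖u‖ * ‖w‖))) := by gcongr
        _ = _ := by ring
    have h2 := (abs_le.1 h1).1
    have h3 : 2 * ((|x 0| * ‖u‖) * (|y| * ‖w‖)) ≤ x 0 ^ 2 * ‖u‖ ^ 2 + y ^ 2 * ‖w‖ ^ 2 := by
      have := two_mul_le_add_sq (|x 0| * ‖u‖) (|y| * ‖w‖)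
      simp only [mul_pow, sq_abs] at this
      linarith
    have h4 : s ^ 2 * ‖u‖ ^ 2 ≤ ‖w‖ ^ 2 := by
      rw [← mul_pow]; gcongr
    have h5 : s ^ 2 * ‖u‖ ^ 2 ≤ ‖u‖ ^ 2 := by
      refine mul_le_of_le_one_left (sq_nonneg _) ?_
      exact pow_le_one₀ hs.le hs1
    have h6 : s ^ 2 * ‖u‖ ^ 2 * (x 0 ^ 2 + y ^ 2) ≤ x 0 ^ 2 * ‖u‖ ^ 2 + y ^ 2 * ‖w‖ ^ 2 := by
      nlinarith [mul_le_mul_of_nonneg_left h4 (sq_nonneg y),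
        mul_le_mul_of_nonneg_left h5 (sq_nonneg (x 0))]
    have h7 := mul_le_mul_of_nonneg_left h6 (show 0 ≤ 1 - κ by linarith)
    have h8 := mul_le_mul_of_nonneg_left h3 hk0
    nlinarith
  · have hw : ‖w‖ ≤ 1 / s * ‖u‖ := by
      rw [one_div, inv_mul_eq_div, le_div_iff₀ hs]; linarith
    have b0 : |x 0| ≤ ‖x‖ := by
      refine abs_le_of_sq_le_sq ?_ (norm_nonneg _)
      rw [hx2]; nlinarith [sq_nonneg y]
    have b1 : |y| ≤ ‖x‖ := by
      refine abs_le_of_sq_le_sq ?_ (norm_nonneg _)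
      rw [hx2]; nlinarith [sq_nonneg (x 0)]
    calc ‖x 0 • u + y • w‖ ≤ |x 0| * ‖u‖ + |y| * ‖w‖ := by
          refine (norm_add_le _ _).trans ?_
          rw [norm_smul, norm_smul, Real.norm_eq_abs, Real.norm_eq_abs]
      _ ≤ ‖x‖ * ‖u‖ + ‖x‖ * (1 / s * ‖u‖) := by gcongr
      _ = _ := by ring

lemma det_bound (A : E2 →ₗ[ℝ] E2) (N : ℝ) (hA : ∀ x, ‖A x‖ ≤ N * ‖x‖) :
    |LinearMap.det A| ≤ 2 * N ^ 2 := by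
  rw [← LinearMap.det_toMatrix (EuclideanSpace.basisFun (Fin 2) ℝ).toBasis, Matrix.det_fin_two]
  have h : ∀ i j, |LinearMap.toMatrix (EuclideanSpace.basisFun (Fin 2) ℝ).toBasis
      (EuclideanSpace.basisFun (Fin 2) ℝ).toBasis A i j| ≤ N := by
    intro i j
    rw [LinearMap.toMatrix_apply]
    simp only [OrthonormalBasis.coe_toBasis, EuclideanSpace.basisFun_apply,
      OrthonormalBasis.coe_toBasis_repr_apply, EuclideanSpace.basisFun_repr]
    have := hA (EuclideanSpace.single j 1)
    rw [EuclideanSpace.norm_single, norm_one, mul_one] at this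
    exact (PiLp.norm_apply_le (A (EuclideanSpace.single j 1)) i).trans this
  set Mx := LinearMap.toMatrix (EuclideanSpace.basisFun (Fin 2) ℝ).toBasis
      (EuclideanSpace.basisFun (Fin 2) ℝ).toBasis A
  have hN : 0 ≤ N := (abs_nonneg _).trans (h 0 0)
  calc _ ≤ |Mx 0 0 * Mx 1 1| + |Mx 0 1 * Mx 1 0| := abs_sub _ _
    _ ≤ N * N + N * N := by
      rw [abs_mul, abs_mul]
      gcongr <;> apply h
    _ = _ := by ring

lemma cov (F : E2 →ᵃ[ℝ] E2) (hF : Function.Injective F) (s : Set E2) (hs : MeasurableSet s)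
    (g : E2 → ℝ) : ∫ y in F '' s, g y = |LinearMap.det F.linear| * ∫ x in s, g (F x) := by
  have hd : ∀ x ∈ s, HasFDerivWithinAt F (LinearMap.toContinuousLinearMap F.linear) s x := by
    intro x _
    have h := ((LinearMap.toContinuousLinearMap F.linear).hasFDerivAt (x := x)).add_const (F 0)
    refine HasFDerivAt.hasFDerivWithinAt ?_
    have hfe : (F : E2 → E2) = fun z => LinearMap.toContinuousLinearMap F.linear z + F 0 :=
      funext fun z => F_eq F z
    rw [hfe]
    exact h
  rw [integral_image_eq_integral_abs_det_fderiv_smul volume hs hd hF.injOn, ← integral_const_mul]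
  simp only [smul_eq_mul]
  rfl

lemma pd_diff {k : ℕ} (a : Fin (k+1) → ℝ) (hW : Differentiable ℝ (Wf a))
    (F : E2 →ᵃ[ℝ] E2) (hF : Function.Injective F) (i : Fin 2) (G : E2 → E2)
    (hG : ∀ x ∈ kiteTri i, G (F x) = x) (m : ℝ) (hm : 0 < m)
    (hlow : ∀ x, m * ‖x‖ ≤ ‖F.linear x‖) (j : Fin 2) (x y : E2)
    (hx : F x ∈ interior (F '' kiteTri i)) (hy : F y ∈ interior (F '' kiteTri i)) :
    |pd j (fun z => Wf a (G z)) (F x) - pd j (fun z => Wf a (G z)) (F y)| ≤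
      ‖fderiv ℝ (Wf a) x - fderiv ℝ (Wf a) y‖ * m⁻¹ := by
  have hinj : Function.Injective F.linear := F.linear_injective_iff.2 hF
  set e := LinearEquiv.ofInjectiveEndo F.linear hinj with he
  set B : E2 →L[ℝ] E2 := LinearMap.toContinuousLinearMap (e.symm : E2 →ₗ[ℝ] E2) with hB
  have hBF : ∀ z, B (F.linear z) = z := by
    intro z
    exact e.symm_apply_apply z
  have hFB : ∀ z, F.linear (B z) = z := by
    intro z
    exact e.apply_symm_apply z
  have hBF' : ∀ z, B (F z - F 0) = z := by
    intro z
    rw [F_eq F z, add_sub_cancel_right, hBF]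
  have hder : ∀ x, F x ∈ interior (F '' kiteTri i) →
      HasFDerivAt (fun z => Wf a (G z)) ((fderiv ℝ (Wf a) x).comp B) (F x) := by
    intro x hx
    have h1 : HasFDerivAt (fun z => B (z - F 0)) B (F x) :=
      B.hasFDerivAt.comp (F x) ((hasFDerivAt_id (F x)).sub_const (F 0))
    have h2 : HasFDerivAt (Wf a) (fderiv ℝ (Wf a) x) (B (F x - F 0)) := by
      rw [hBF']; exact (hW x).hasFDerivAt
    refine (h2.comp (F x) h1).congr_of_eventuallyEq ?_
    filter_upwards [isOpen_interior.mem_nhds hx] with z hz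
    obtain ⟨t, ht, rfl⟩ := interior_subset hz
    simp only [Function.comp]
    rw [hG t ht, hBF']
  unfold pd
  rw [(hder x hx).fderiv, (hder y hy).fderiv]
  simp only [ContinuousLinearMap.comp_apply]
  rw [← sub_apply, ← Real.norm_eq_abs]
  refine (ContinuousLinearMap.le_opNorm _ _).trans ?_
  gcongr
  have := hlow (B (EuclideanSpace.single j 1))
  rw [hFB, EuclideanSpace.norm_single, norm_one] at this
  rw [inv_eq_one_div, le_div_iff₀ hm]
  linarith

lemma gag_bound_s13 {k : ℕ} (θ : ℝ) (hθ0 : 0 < θ) (a : Fin (k+1) → ℝ) (hW : Differentiable ℝ (Wf a))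
    (L : ℝ) (hL : 0 ≤ L)
    (hlip : ∀ x y, ‖fderiv ℝ (Wf a) x - fderiv ℝ (Wf a) y‖ ≤ L * ‖x - y‖)
    (F : E2 →ᵃ[ℝ] E2) (hF : Function.Injective F) (i : Fin 2) (G : E2 → E2)
    (hG : ∀ x ∈ kiteTri i, G (F x) = x) (m : ℝ) (hm : 0 < m)
    (hlow : ∀ x, m * ‖x‖ ≤ ‖F.linear x‖) (j : Fin 2) (K : ℝ) (hK0 : 0 < K)
    (hK : ∀ (i : Fin 2) (U : Set E2), MeasurableSet U → U ⊆ kiteTri i → ∀ x ∈ U,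
      IntegrableOn (fun y : E2 => ‖x - y‖ ^ (-(2 * θ))) U ∧
      ∫ y in U, ‖x - y‖ ^ (-(2 * θ)) ≤ K) :
    gagSq θ (interior (F '' kiteTri i)) (pd j (fun z => Wf a (G z))) ≤
      |LinearMap.det F.linear| ^ 2 * (L ^ 2 * m ^ (-(4 + 2 * θ)) * K *
        volume.real (closedBall (0:E2) 1)) := by
  set U : Set E2 := F ⁻¹' interior (F '' kiteTri i) with hU
  have hFc : Continuous F := F.continuous_of_finiteDimensional
  have hUm : MeasurableSet U := (isOpen_interior.preimage hFc).measurableSet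
  have hUK : U ⊆ kiteTri i := by
    intro x hx
    obtain ⟨t, ht, h⟩ := interior_subset (show F x ∈ interior (F '' kiteTri i) from hx)
    rwa [← hF h]
  have hUi : interior (F '' kiteTri i) = F '' U := by
    rw [hU, image_preimage_eq_of_subset]
    exact interior_subset.trans (image_subset_range _ _)
  set g := pd j (fun z => Wf a (G z)) with hg
  set D := |LinearMap.det F.linear| with hD
  have hD0 : 0 ≤ D := abs_nonneg _
  set c := L ^ 2 * m ^ (-(4 + 2 * θ)) with hc
  have hc0 : 0 ≤ c := by positivity
  have hpt : ∀ x ∈ U, ∀ y ∈ U, (g (F x) - g (F y)) ^ 2 / dist (F x) (F y) ^ (2 + 2 * θ) ≤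
      c * ‖x - y‖ ^ (-(2 * θ)) := by
    intro x hx y hy
    rcases eq_or_ne x y with rfl | hne
    · simp only [sub_self]
      rw [zero_pow two_ne_zero, zero_div]
      positivity
    have hn : 0 < ‖x - y‖ := norm_pos_iff.2 (sub_ne_zero.2 hne)
    have h1 : |g (F x) - g (F y)| ≤ (L * ‖x - y‖) * m⁻¹ := by
      refine (pd_diff a hW F hF i G hG m hm hlow j x y hx hy).trans ?_
      gcongr
      exact hlip x y
    have h2 : (g (F x) - g (F y)) ^ 2 ≤ ((L * ‖x - y‖) * m⁻¹) ^ 2 := by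
      rw [← sq_abs]; gcongr
    have h3 : m * ‖x - y‖ ≤ dist (F x) (F y) := by
      rw [dist_eq_norm, F_eq F x, F_eq F y, add_sub_add_right_eq_sub, ← map_sub]
      exact hlow _
    calc _ ≤ ((L * ‖x - y‖) * m⁻¹) ^ 2 / (m * ‖x - y‖) ^ (2 + 2 * θ) := by
          gcongr
      _ = c * ‖x - y‖ ^ (-(2 * θ)) := by
        rw [hc, Real.mul_rpow hm.le hn.le, Real.rpow_neg hm.le, Real.rpow_neg hn.le,
          Real.rpow_add hm, Real.rpow_add hm, Real.rpow_add hn]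
        have e4 : m ^ (4:ℝ) = m ^ 4 := by exact_mod_cast Real.rpow_natCast m 4
        rw [e4, Real.rpow_two, Real.rpow_two]
        have := Real.rpow_pos_of_pos hm (2 * θ)
        have := Real.rpow_pos_of_pos hn (2 * θ)
        field_simp
  have hinner : ∀ x ∈ U, ∫ y in interior (F '' kiteTri i),
      (g (F x) - g y) ^ 2 / dist (F x) y ^ (2 + 2 * θ) ≤ D * (c * K) := by
    intro x hx
    rw [hUi, cov F hF U hUm]
    refine mul_le_mul_of_nonneg_left ?_ hD0
    obtain ⟨hi, hle⟩ := hK i U hUm hUK x hx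
    calc _ ≤ ∫ y in U, c * ‖x - y‖ ^ (-(2 * θ)) := by
          refine integral_mono_of_nonneg (Eventually.of_forall fun y => by positivity)
            (hi.const_mul c) ?_
          filter_upwards [ae_restrict_mem hUm] with y hy using hpt x hx y hy
      _ ≤ c * K := by
        rw [integral_const_mul]; gcongr
  unfold gagSq
  rw [hUi, cov F hF U hUm, ← hUi, sq, mul_assoc]
  refine mul_le_mul_of_nonneg_left ?_ hD0
  have hfin : volume U ≠ ∞ :=
    ((measure_mono hUK).trans_lt (kite_compact i).measure_lt_top).ne
  calc _ ≤ ∫ x in U, D * (c * K) := by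
        refine integral_mono_of_nonneg (Eventually.of_forall fun x =>
          integral_nonneg fun y => by positivity) ?_ ?_
        · exact integrableOn_const hfin
        · filter_upwards [ae_restrict_mem hUm] with x hx using hinner x hx
    _ = volume.real U * (D * (c * K)) := by rw [setIntegral_const, smul_eq_mul]
    _ ≤ volume.real (closedBall (0:E2) 1) * (D * (c * K)) := by
      refine mul_le_mul_of_nonneg_right ?_ (by positivity)
      exact measureReal_mono (hUK.trans (kite_bdd i)) (measure_closedBall_lt_top (μ := volume)).ne
    _ = _ := by ring

/-- **Cut-off across edges** (Lemma 3.7): with `η_E := η_{B̂} ∘ F⁻¹` for the bump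
function of the maximal ball `B̂` in the reference edge patch `T̂₁ ∪ T̂₂`, and
`v := V̂ ∘ F⁻¹` the extension of a one-variable polynomial of degree `≤ k`:
`∫_E v² ≲ ∫_E v² η_E`, `|∇(v η_E)|_{θ,Tᵢ} ≲ h_E^{−1−θ} ‖v η_E‖_{0,Tᵢ}` and
`‖v η_E‖_{0,Tᵢ} ≲ h_E^{1/2} ‖v‖_{0,E}`. -/
theorem cutoff_across_edges (k : ℕ) (θ σ : ℝ) (hθ0 : 0 < θ) (hθ : θ < 1 / 2)
    (hσ : 0 < σ) :
    ∃ C : ℝ, 0 < C ∧ ∀ (F : Fin 2 → E2 →ᵃ[ℝ] E2) (G : E2 → E2),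
      (∀ i, Function.Injective (F i)) →
      (∀ x ∈ refEdge, F 0 x = F 1 x) →
      (∀ i, ∀ x ∈ kiteTri i, G (F i x) = x) →
      (∀ i, angleLB σ (fun j => F i (kiteVert i j))) →
      (F 0 '' kiteTri 0) ∩ (F 1 '' kiteTri 1) = F 0 '' refEdge →
      ∀ q : Polynomial ℝ, q.natDegree ≤ k →
        ((∫ y in F 0 '' refEdge, (q.eval (G y 0)) ^ 2 ∂(μH[1])) ≤
          C * ∫ y in F 0 '' refEdge,
            (q.eval (G y 0)) ^ 2 * etaBump kiteC kiteR (G y) ∂(μH[1])) ∧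
        ∀ i : Fin 2,
          Real.sqrt (∑ j : Fin 2, gagSq θ (interior (F i '' kiteTri i))
              (pd j fun y => q.eval (G y 0) * etaBump kiteC kiteR (G y))) ≤
            C * dist (F 0 0) (F 0 (EuclideanSpace.single 0 1)) ^ (-1 - θ) *
              Real.sqrt (∫ y in F i '' kiteTri i,
                (q.eval (G y 0) * etaBump kiteC kiteR (G y)) ^ 2) ∧
          Real.sqrt (∫ y in F i '' kiteTri i,
              (q.eval (G y 0) * etaBump kiteC kiteR (G y)) ^ 2) ≤
            C * dist (F 0 0) (F 0 (EuclideanSpace.single 0 1)) ^ ((1 : ℝ) / 2) *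
              Real.sqrt (∫ y in F 0 '' refEdge, (q.eval (G y 0)) ^ 2 ∂(μH[1])) := by
  obtain ⟨m, hm, M, hM, hgeom⟩ := geom_s13 σ hσ
  obtain ⟨K, hK0, hK⟩ := sing_bound θ hθ
  obtain ⟨L, hL, hlip⟩ := Wf_lip k
  obtain ⟨u1, hu1, hQ1u⟩ := quad_upper (k := k) Q1 Q1_cont Q1_smul
  obtain ⟨l1, hl1, hQ1l⟩ := quad_lower (k := k) Q1 Q1_cont Q1_smul Q1_pos
  obtain ⟨l2, hl2, hQ2l⟩ := quad_lower (k := k) Q2 Q2_cont Q2_smul Q2_pos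
  have h3u : ∃ c > 0, ∀ (i : Fin 2) (a : Fin (k+1) → ℝ), Q3 i a ≤ c * ‖a‖ ^ 2 := by
    obtain ⟨c0, hc0, h0⟩ := quad_upper (k := k) (Q3 0) (Q3_cont 0) (Q3_smul 0)
    obtain ⟨c1, hc1, h1⟩ := quad_upper (k := k) (Q3 1) (Q3_cont 1) (Q3_smul 1)
    refine ⟨c0 + c1, by positivity, fun i a => ?_⟩
    have := sq_nonneg ‖a‖
    fin_cases i
    · exact (h0 a).trans (by gcongr; linarith)
    · exact (h1 a).trans (by gcongr; linarith)
  have h3l : ∃ c > 0, ∀ (i : Fin 2) (a : Fin (k+1) → ℝ), c * ‖a‖ ^ 2 ≤ Q3 i a := by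
    obtain ⟨c0, hc0, h0⟩ := quad_lower (k := k) (Q3 0) (Q3_cont 0) (Q3_smul 0) (Q3_pos 0)
    obtain ⟨c1, hc1, h1⟩ := quad_lower (k := k) (Q3 1) (Q3_cont 1) (Q3_smul 1) (Q3_pos 1)
    refine ⟨min c0 c1, by positivity, fun i a => ?_⟩
    fin_cases i
    · exact le_trans (by gcongr; exact min_le_left _ _) (h0 a)
    · exact le_trans (by gcongr; exact min_le_right _ _) (h1 a)
  obtain ⟨u3, hu3, hQ3u⟩ := h3u
  obtain ⟨l3, hl3, hQ3l⟩ := h3l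
  set V := volume.real (closedBall (0:E2) 1) with hV
  have hV0 : 0 ≤ V := measureReal_nonneg
  set C1 := u1 / l2 with hC1
  set X2 := 4 * M ^ 2 * L ^ 2 * m ^ (-(4 + 2 * θ)) * K * V / l3 with hX2
  set X3 := 2 * M ^ 2 * u3 / l1 with hX3
  have hC10 : 0 < C1 := by positivity
  have hX20 : 0 ≤ X2 := by positivity
  have hX30 : 0 ≤ X3 := by positivity
  have hs2 := Real.sqrt_nonneg X2
  have hs3 := Real.sqrt_nonneg X3
  refine ⟨C1 + Real.sqrt X2 + Real.sqrt X3, by positivity, ?_⟩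
  intro F G hinj hedge hG hang hint q hq
  set a : Fin (k+1) → ℝ := fun j => q.coeff j with ha
  have hqa : ∀ t, q.eval t = pa a t := by
    intro t
    rw [Polynomial.eval_eq_sum_range' (Nat.lt_succ_of_le hq), Finset.sum_range]
    rfl
  simp only [hqa]
  change _ ∧ ∀ i : Fin 2, Real.sqrt (∑ j : Fin 2, gagSq θ (interior (F i '' kiteTri i))
      (pd j fun y => Wf a (G y))) ≤ (C1 + Real.sqrt X2 + Real.sqrt X3) *
        dist (F 0 0) (F 0 e0) ^ (-1 - θ) * Real.sqrt (∫ y in F i '' kiteTri i, Wf a (G y) ^ 2) ∧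
      Real.sqrt (∫ y in F i '' kiteTri i, Wf a (G y) ^ 2) ≤
        (C1 + Real.sqrt X2 + Real.sqrt X3) * dist (F 0 0) (F 0 e0) ^ ((1:ℝ) / 2) *
          Real.sqrt (∫ y in F 0 '' refEdge, (pa a (G y 0)) ^ 2 ∂(μH[1]))
  set h := dist (F 0 0) (F 0 e0) with hh
  have hpos : 0 < h := by
    refine dist_pos.2 fun he => ?_
    have h1 := hinj 0 he
    have h2 := congrArg (fun z : E2 => z 0) h1
    simp [e0] at h2
  have hGe : ∀ t ∈ Icc (0:ℝ) 1, G (F 0 (t • e0)) = t • e0 := by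
    intro t ht
    refine hG 0 _ (edge_sub 0 ?_)
    rw [refEdge_eq]
    exact ⟨t, ht, rfl⟩
  have he0 : ∀ t : ℝ, (t • e0 : E2) 0 = t := by intro t; simp [e0]
  have hE1 : ∫ y in F 0 '' refEdge, (pa a (G y 0)) ^ 2 ∂(μH[1]) = h * Q1 a := by
    rw [edge_integral (F 0) h hh hpos, Q1]
    congr 1
    refine setIntegral_congr_fun measurableSet_Icc fun t ht => ?_
    simp only [hGe t ht, he0]
  have hE2 : ∫ y in F 0 '' refEdge, (pa a (G y 0)) ^ 2 * etaBump kiteC kiteR (G y) ∂(μH[1])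
      = h * Q2 a := by
    rw [edge_integral (F 0) h hh hpos, Q2]
    congr 1
    refine setIntegral_congr_fun measurableSet_Icc fun t ht => ?_
    simp only [hGe t ht, he0]
  have hna : 0 ≤ ‖a‖ ^ 2 := by positivity
  have hQ20 : 0 ≤ Q2 a := le_trans (by positivity) (hQ2l a)
  refine ⟨?_, fun i => ?_⟩
  · rw [hE1, hE2]
    have h1 : Q1 a ≤ C1 * Q2 a := by
      calc Q1 a ≤ u1 * ‖a‖ ^ 2 := hQ1u a
        _ = C1 * (l2 * ‖a‖ ^ 2) := by rw [hC1]; field_simp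
        _ ≤ C1 * Q2 a := by gcongr; exact hQ2l a
    calc h * Q1 a ≤ h * (C1 * Q2 a) := by gcongr
      _ = C1 * (h * Q2 a) := by ring
      _ ≤ _ := by gcongr; linarith
  have hhi : dist (F i 0) (F i e0) = h := by
    have hz : (0 : E2) ∈ refEdge := left_mem_segment _ _ _
    have ho : e0 ∈ refEdge := right_mem_segment _ _ _
    fin_cases i
    · rfl
    · change dist (F 1 0) (F 1 e0) = h
      rw [← hedge _ hz, ← hedge _ ho]
  have hg := hgeom i (F i) (hinj i) (hang i)
  rw [hhi] at hg
  set D := |LinearMap.det (F i).linear| with hD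
  have hD0 : 0 ≤ D := abs_nonneg _
  have hDle : D ≤ 2 * (M * h) ^ 2 := det_bound _ _ fun x => (hg x).2
  have hI : ∫ y in F i '' kiteTri i, Wf a (G y) ^ 2 = D * Q3 i a := by
    rw [cov (F i) (hinj i) _ (kite_compact i).measurableSet, Q3]
    congr 1
    refine setIntegral_congr_fun (kite_compact i).measurableSet fun x hx => ?_
    simp only [hG i x hx]
  rw [hI, hE1]
  constructor
  · have hgag : ∀ j : Fin 2, gagSq θ (interior (F i '' kiteTri i)) (pd j fun y => Wf a (G y)) ≤
        D ^ 2 * ((L * ‖a‖) ^ 2 * (m * h) ^ (-(4 + 2 * θ)) * K * V) := fun j =>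
      gag_bound_s13 θ hθ0 a (hlip a).1 (L * ‖a‖) (by positivity) (hlip a).2 (F i) (hinj i) i G (hG i)
        (m * h) (by positivity) (fun x => (hg x).1) j K hK0 hK
    have hsum : ∑ j : Fin 2, gagSq θ (interior (F i '' kiteTri i)) (pd j fun y => Wf a (G y)) ≤
        (Real.sqrt X2 * h ^ (-1 - θ)) ^ 2 * (D * Q3 i a) := by
      have hp : (h ^ (-1 - θ)) ^ 2 = h ^ 2 * h ^ (-(4 + 2 * θ)) := by
        rw [← Real.rpow_natCast (h ^ (-1 - θ)), ← Real.rpow_mul hpos.le, ← Real.rpow_natCast h,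
          ← Real.rpow_add hpos]
        congr 1; push_cast; ring
      rw [Fin.sum_univ_two, mul_pow, Real.sq_sqrt hX20, hp]
      calc _ ≤ 2 * (D ^ 2 * ((L * ‖a‖) ^ 2 * (m * h) ^ (-(4 + 2 * θ)) * K * V)) := by
            linarith [hgag 0, hgag 1]
        _ = D * D * (2 * L ^ 2 * m ^ (-(4 + 2 * θ)) * h ^ (-(4 + 2 * θ)) * K * V * ‖a‖ ^ 2) := by
          rw [Real.mul_rpow hm.le hpos.le]; ring
        _ ≤ D * (2 * (M * h) ^ 2) *
            (2 * L ^ 2 * m ^ (-(4 + 2 * θ)) * h ^ (-(4 + 2 * θ)) * K * V * ‖a‖ ^ 2) := by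
          gcongr
        _ = X2 * (h ^ 2 * h ^ (-(4 + 2 * θ))) * (D * (l3 * ‖a‖ ^ 2)) := by
          rw [hX2]; field_simp; ring
        _ ≤ _ := by gcongr; exact hQ3l i a
    calc _ ≤ Real.sqrt ((Real.sqrt X2 * h ^ (-1 - θ)) ^ 2 * (D * Q3 i a)) := Real.sqrt_le_sqrt hsum
      _ = Real.sqrt X2 * h ^ (-1 - θ) * Real.sqrt (D * Q3 i a) := by
        rw [Real.sqrt_mul (sq_nonneg _), Real.sqrt_sq (by positivity)]
      _ ≤ _ := by gcongr; linarith
  · have hle : D * Q3 i a ≤ (Real.sqrt X3 * h ^ ((1:ℝ)/2)) ^ 2 * (h * Q1 a) := by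
      rw [mul_pow, Real.sq_sqrt hX30, ← Real.sqrt_eq_rpow, Real.sq_sqrt hpos.le]
      calc D * Q3 i a ≤ (2 * (M * h) ^ 2) * (u3 * ‖a‖ ^ 2) := by
            gcongr
            · exact le_trans (by positivity) (hQ3l i a)
            · exact hQ3u i a
        _ = X3 * h * (h * (l1 * ‖a‖ ^ 2)) := by rw [hX3]; field_simp
        _ ≤ _ := by gcongr; exact hQ1l a
    calc _ ≤ Real.sqrt ((Real.sqrt X3 * h ^ ((1:ℝ)/2)) ^ 2 * (h * Q1 a)) := Real.sqrt_le_sqrt hle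
      _ = Real.sqrt X3 * h ^ ((1:ℝ)/2) * Real.sqrt (h * Q1 a) := by
        rw [Real.sqrt_mul (sq_nonneg _), Real.sqrt_sq (by positivity)]
      _ ≤ _ := by gcongr; linarith

end
end
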